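/- arXiv:0805.0582 — 3 statements merged into one kernel-verified Lean document; each statement's English description precedes it below -/
import Mathlib

section
/- Let H be a Hopf k-algebra weakly acting on a k-algebra A and let f : H ⊗_k H → A be a k-linear map. The (a priori nonassociative, nonunital) algebra A #_f H is associative with 1#1 as identity element if and only if the following three conditions hold: (i) normality, f(h,1) = f(1,h) = ε(h)1_A for all h ∈ H; (ii) the cocycle condition, f(l^{(1)}, m^{(1)})^{h^{(1)}} f(h^{(2)}, l^{(2)} m^{(2)}) = f(h^{(1)}, l^{(1)}) f(h^{(2)} l^{(2)}, m) for all h, l, m ∈ H; (iii) the twisted module condition, (a^{l^{(1)}})^{h^{(1)}} f(h^{(2)}, l^{(2)}) = f(h^{(1)}, l^{(1)}) a^{h^{(2)} l^{(2)}} for all h, l ∈ H and a ∈ A. -/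
open TensorProduct

noncomputable section CrossedProduct

variable (k A H : Type*) [CommRing k] [Ring A] [Algebra k A] [Ring H] [HopfAlgebra k H]

/-- A chosen "Sweedler representation" of the comultiplication of `H`:
`comul h = ∑_{i < n h} c₁ h i ⊗ c₂ h i` for every `h`. -/
def IsSweedlerRep (n : H → ℕ) (c₁ c₂ : H → ℕ → H) : Prop :=
  ∀ h : H, Coalgebra.comul (R := k) h = ∑ i ∈ Finset.range (n h), c₁ h i ⊗ₜ[k] c₂ h i

/-- `σ` is a weak action of `H` on `A`: `(ab)^h = a^{h⁽¹⁾} b^{h⁽²⁾}`, `1^h = ε(h)1`, `a^1 = a`. -/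
def IsWeakAction (n : H → ℕ) (c₁ c₂ : H → ℕ → H) (σ : H →ₗ[k] A →ₗ[k] A) : Prop :=
  (∀ (h : H) (a b : A),
      σ h (a * b) = ∑ i ∈ Finset.range (n h), σ (c₁ h i) a * σ (c₂ h i) b) ∧
  (∀ h : H, σ h (1 : A) = Coalgebra.counit (R := k) h • (1 : A)) ∧
  (∀ a : A, σ (1 : H) a = a)

/-- Condition (i): normality of the cocycle `f`. -/
def IsNormal (f : H →ₗ[k] H →ₗ[k] A) : Prop :=
  ∀ h : H, f h (1 : H) = Coalgebra.counit (R := k) h • (1 : A) ∧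
    f (1 : H) h = Coalgebra.counit (R := k) h • (1 : A)

/-- Condition (ii): the cocycle condition
`f(l⁽¹⁾,m⁽¹⁾)^{h⁽¹⁾} f(h⁽²⁾, l⁽²⁾m⁽²⁾) = f(h⁽¹⁾,l⁽¹⁾) f(h⁽²⁾l⁽²⁾, m)`. -/
def IsCocycle (n : H → ℕ) (c₁ c₂ : H → ℕ → H) (σ : H →ₗ[k] A →ₗ[k] A)
    (f : H →ₗ[k] H →ₗ[k] A) : Prop :=
  ∀ h l m : H,
    (∑ i ∈ Finset.range (n h), ∑ j ∈ Finset.range (n l), ∑ p ∈ Finset.range (n m),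
      σ (c₁ h i) (f (c₁ l j) (c₁ m p)) * f (c₂ h i) (c₂ l j * c₂ m p)) =
    ∑ i ∈ Finset.range (n h), ∑ j ∈ Finset.range (n l),
      f (c₁ h i) (c₁ l j) * f (c₂ h i * c₂ l j) m

/-- Condition (iii): the twisted module condition
`(a^{l⁽¹⁾})^{h⁽¹⁾} f(h⁽²⁾,l⁽²⁾) = f(h⁽¹⁾,l⁽¹⁾) a^{h⁽²⁾l⁽²⁾}`. -/
def IsTwistedModule (n : H → ℕ) (c₁ c₂ : H → ℕ → H) (σ : H →ₗ[k] A →ₗ[k] A)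
    (f : H →ₗ[k] H →ₗ[k] A) : Prop :=
  ∀ (h l : H) (a : A),
    (∑ i ∈ Finset.range (n h), ∑ j ∈ Finset.range (n l),
      σ (c₁ h i) (σ (c₁ l j) a) * f (c₂ h i) (c₂ l j)) =
    ∑ i ∈ Finset.range (n h), ∑ j ∈ Finset.range (n l),
      f (c₁ h i) (c₁ l j) * σ (c₂ h i * c₂ l j) a

/-- `finv` is the convolution inverse of `f`:
`f(h⁽¹⁾,l⁽¹⁾) f⁻¹(h⁽²⁾,l⁽²⁾) = f⁻¹(h⁽¹⁾,l⁽¹⁾) f(h⁽²⁾,l⁽²⁾) = ε(h)ε(l)1_A`. -/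
def IsConvInverse (n : H → ℕ) (c₁ c₂ : H → ℕ → H) (f finv : H →ₗ[k] H →ₗ[k] A) : Prop :=
  ∀ h l : H,
    (∑ i ∈ Finset.range (n h), ∑ j ∈ Finset.range (n l),
        f (c₁ h i) (c₁ l j) * finv (c₂ h i) (c₂ l j) =
      (Coalgebra.counit (R := k) h * Coalgebra.counit (R := k) l) • (1 : A)) ∧
    (∑ i ∈ Finset.range (n h), ∑ j ∈ Finset.range (n l),
        finv (c₁ h i) (c₁ l j) * f (c₂ h i) (c₂ l j) =
      (Coalgebra.counit (R := k) h * Coalgebra.counit (R := k) l) • (1 : A))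

/-- The multiplication of `A #_f H` as a bilinear map on `A ⊗[k] H`:
`(a # h)(b # l) = a b^{h⁽¹⁾} f(h⁽²⁾, l⁽¹⁾) # h⁽³⁾ l⁽²⁾`. -/
def crossedMul (σ : H →ₗ[k] A →ₗ[k] A) (f : H →ₗ[k] H →ₗ[k] A) :
    (A ⊗[k] H) →ₗ[k] (A ⊗[k] H) →ₗ[k] (A ⊗[k] H) :=
  TensorProduct.lift
    (((LinearMap.llcomp k (A ⊗[k] H) (A ⊗[k] H) (A ⊗[k] H)).comp
        (TensorProduct.curry
          ((LinearMap.rTensor H (LinearMap.mul' k A)) ∘ₗ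
            (TensorProduct.assoc k A A H).symm.toLinearMap))).compl₂
      (TensorProduct.curry
        ((LinearMap.rTensor H (LinearMap.mul' k A)) ∘ₗ
         (TensorProduct.map
            (TensorProduct.map (TensorProduct.lift σ) (TensorProduct.lift f))
            (LinearMap.mul' k H)) ∘ₗ
         (LinearMap.rTensor (H ⊗[k] H)
            (TensorProduct.tensorTensorTensorComm k H H A H).toLinearMap) ∘ₗ
         (TensorProduct.tensorTensorTensorComm k (H ⊗[k] H) H (A ⊗[k] H) H).toLinearMap ∘ₗ
         (TensorProduct.map
            ((LinearMap.rTensor H (Coalgebra.comul (R := k))) ∘ₗ (Coalgebra.comul (R := k)))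
            ((TensorProduct.assoc k A H H).symm.toLinearMap ∘ₗ
              (LinearMap.lTensor A (Coalgebra.comul (R := k))))))))

/-- The unit `1 # 1` of the crossed product. -/
def oneE : A ⊗[k] H := (1 : A) ⊗ₜ[k] (1 : H)

/-- The map `γ : H → A #_f H`, `γ(h) = 1 # h`. -/
def gam : H →ₗ[k] A ⊗[k] H := TensorProduct.mk k A H 1

/-- The map `h ↦ f⁻¹(S(h⁽²⁾), h⁽³⁾) # S(h⁽¹⁾)`, the convolution inverse of `γ`. -/
def gammaInv (finv : H →ₗ[k] H →ₗ[k] A) : H →ₗ[k] A ⊗[k] H :=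
  (TensorProduct.comm k H A).toLinearMap ∘ₗ
    (TensorProduct.map (HopfAlgebra.antipode (R := k))
      ((TensorProduct.lift finv) ∘ₗ (LinearMap.rTensor H (HopfAlgebra.antipode (R := k))))) ∘ₗ
    (LinearMap.lTensor H (Coalgebra.comul (R := k))) ∘ₗ (Coalgebra.comul (R := k))

/-- The canonical coaction `ν = id_A ⊗ Δ : A #_f H → (A #_f H) ⊗ H`. -/
def nuE : (A ⊗[k] H) →ₗ[k] (A ⊗[k] H) ⊗[k] H :=
  (TensorProduct.assoc k A H H).symm.toLinearMap ∘ₗ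
    (LinearMap.lTensor A (Coalgebra.comul (R := k)))

/-- Convolution product on `Hom_k(H, A #_f H)`: `(u * v)(h) = u(h⁽¹⁾) v(h⁽²⁾)`. -/
def convMul (σ : H →ₗ[k] A →ₗ[k] A) (f : H →ₗ[k] H →ₗ[k] A)
    (u v : H →ₗ[k] A ⊗[k] H) : H →ₗ[k] A ⊗[k] H :=
  (TensorProduct.lift (crossedMul k A H σ f)) ∘ₗ (TensorProduct.map u v) ∘ₗ
    (Coalgebra.comul (R := k))

/-- The unit of the convolution algebra `Hom_k(H, A #_f H)`: `h ↦ ε(h) 1_E`. -/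
def convOne : H →ₗ[k] A ⊗[k] H :=
  (LinearMap.toSpanSingleton k (A ⊗[k] H) (oneE k A H)) ∘ₗ (Coalgebra.counit (R := k))

/-- Sum over iterated (right-nested) Sweedler components:
`swSum n c₁ c₂ r h F = ∑ F (h⁽¹⁾, …, h⁽ʳ⁺¹⁾)`. -/
def swSum {M : Type*} [AddCommMonoid M] (n : H → ℕ) (c₁ c₂ : H → ℕ → H) :
    (r : ℕ) → H → ((Fin (r + 1) → H) → M) → M
  | 0, h, F => F (fun _ => h)
  | (r + 1), h, F =>
      ∑ i ∈ Finset.range (n h), swSum n c₁ c₂ r (c₂ h i) (fun g => F (Fin.cons (c₁ h i) g))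

/-- The product of a list of elements of the crossed product. -/
def prodE (σ : H →ₗ[k] A →ₗ[k] A) (f : H →ₗ[k] H →ₗ[k] A) :
    List (A ⊗[k] H) → A ⊗[k] H
  | [] => oneE k A H
  | x :: L => crossedMul k A H σ f x (prodE σ f L)

end CrossedProduct
namespace CPA
noncomputable section

section general
variable {k A C D E E' : Type*} [CommRing k] [Ring A] [Algebra k A]
  [AddCommGroup C] [Module k C] [AddCommGroup D] [Module k D]
  [AddCommGroup E] [Module k E] [Module A E] [IsScalarTower k A E]
  [AddCommGroup E'] [Module k E'] [Module A E'] [IsScalarTower k A E']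

/-- `c ⊗ d ↦ u(c) • g(d)`. -/
def bil (u : C →ₗ[k] A) (g : D →ₗ[k] E) : C ⊗[k] D →ₗ[k] E :=
  TensorProduct.lift (LinearMap.compl₁₂ (Algebra.lsmul k k E).toLinearMap u g)

@[simp] lemma bil_tmul (u : C →ₗ[k] A) (g : D →ₗ[k] E) (c : C) (d : D) :
    bil u g (c ⊗ₜ d) = u c • g d := rfl

variable [Coalgebra k C] [Coalgebra k D]

/-- `c ↦ u(c⁽¹⁾) • g(c⁽²⁾)`. -/
def act (u : C →ₗ[k] A) (g : C →ₗ[k] E) : C →ₗ[k] E := bil u g ∘ₗ Coalgebra.comul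

lemma act_sum {ι : Type*} (s : Finset ι) (x y : ι → C) (c : C)
    (h : Coalgebra.comul (R := k) c = ∑ i ∈ s, x i ⊗ₜ[k] y i)
    (u : C →ₗ[k] A) (g : C →ₗ[k] E) : act u g c = ∑ i ∈ s, u (x i) • g (y i) := by
  simp [act, h]

lemma act_act (u v : C →ₗ[k] A) (g : C →ₗ[k] E) : act (act u v) g = act u (act v g) := by
  have h1 : bil u (act v g) = bil u (bil v g) ∘ₗ Coalgebra.comul.lTensor C := by
    ext c d; simp [act]
  have h2 : bil (act u v) g = bil u (bil v g) ∘ₗ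
      (TensorProduct.assoc k C C C).toLinearMap ∘ₗ Coalgebra.comul.rTensor C := by
    ext c d
    simp only [act, TensorProduct.AlgebraTensorModule.curry_apply, LinearMap.restrictScalars_self,
      TensorProduct.curry_apply, bil_tmul, LinearMap.comp_apply, LinearMap.rTensor_tmul,
      LinearEquiv.coe_coe]
    induction Coalgebra.comul (R := k) c using TensorProduct.induction_on with
    | zero => simp
    | tmul x y => simp [mul_smul]
    | add x y hx hy => simp only [map_add, add_smul, TensorProduct.add_tmul, hx, hy]
  ext c
  change bil (act u v) g (Coalgebra.comul c) = bil u (act v g) (Coalgebra.comul c)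
  rw [h1, h2]
  simp only [LinearMap.comp_apply, LinearEquiv.coe_coe, Coalgebra.coassoc_apply]

lemma act_comp (φ : D →ₗc[k] C) (u : C →ₗ[k] A) (g : C →ₗ[k] E) :
    act u g ∘ₗ φ.toLinearMap = act (u ∘ₗ φ.toLinearMap) (g ∘ₗ φ.toLinearMap) := by
  have h : bil (u ∘ₗ φ.toLinearMap) (g ∘ₗ φ.toLinearMap) =
    bil u g ∘ₗ TensorProduct.map φ.toLinearMap φ.toLinearMap := by ext; simp
  rw [act, act, h, LinearMap.comp_assoc, LinearMap.comp_assoc]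
  congr 1
  exact φ.map_comp_comul.symm

/-- `c ↦ ε(c) 1_A`. -/
def eps (k A C : Type*) [CommRing k] [Ring A] [Algebra k A] [AddCommGroup C] [Module k C]
    [Coalgebra k C] : C →ₗ[k] A := Algebra.linearMap k A ∘ₗ Coalgebra.counit

lemma eps_apply (c : C) : eps k A C c = Coalgebra.counit (R := k) c • (1 : A) := by
  simp [eps, Algebra.algebraMap_eq_smul_one]

lemma eps_act (g : C →ₗ[k] E) : act (eps k A C) g = g := by
  ext c
  let r := Coalgebra.Repr.arbitrary k c
  rw [act_sum r.index r.left r.right c r.eq.symm]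
  conv_rhs => rw [← Coalgebra.sum_counit_smul r, map_sum]
  simp [eps_apply]

lemma act_eps (u : C →ₗ[k] A) : act u (eps k A C) = u := by
  ext c
  let r := Coalgebra.Repr.arbitrary k c
  rw [act_sum r.index r.left r.right c r.eq.symm]
  have h := congr(u (TensorProduct.rid k C $(Coalgebra.sum_tmul_counit_eq (R := k) r)))
  simp only [map_sum, TensorProduct.rid_tmul, map_smul, one_smul] at h
  simpa [eps_apply] using h

lemma comp_act (L : E →ₗ[A] E') (u : C →ₗ[k] A) (g : C →ₗ[k] E) (L' : E →ₗ[k] E')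
    (hL : ∀ x, L' x = L x) :
    L' ∘ₗ act u g = act u (L' ∘ₗ g) := by
  have h : bil u (L' ∘ₗ g) = L' ∘ₗ bil u g := by ext; simp [hL]
  rw [act, act, h, LinearMap.comp_assoc]

lemma comul_tmul_sum {ι κ : Type*} (s : Finset ι) (x y : ι → C) (c : C)
    (h : Coalgebra.comul (R := k) c = ∑ i ∈ s, x i ⊗ₜ[k] y i)
    (t : Finset κ) (z w : κ → D) (d : D)
    (h' : Coalgebra.comul (R := k) d = ∑ i ∈ t, z i ⊗ₜ[k] w i) :
    Coalgebra.comul (R := k) (c ⊗ₜ[k] d) =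
      ∑ p ∈ s ×ˢ t, (x p.1 ⊗ₜ[k] z p.2) ⊗ₜ[k] (y p.1 ⊗ₜ[k] w p.2) := by
  rw [TensorProduct.comul_tmul, h, h', Finset.sum_product]
  simp only [TensorProduct.sum_tmul, TensorProduct.tmul_sum, map_sum]
  rw [Finset.sum_comm]
  rfl

lemma act_tmul_sum {ι κ : Type*} (s : Finset ι) (x y : ι → C) (c : C)
    (h : Coalgebra.comul (R := k) c = ∑ i ∈ s, x i ⊗ₜ[k] y i)
    (t : Finset κ) (z w : κ → D) (d : D)
    (h' : Coalgebra.comul (R := k) d = ∑ i ∈ t, z i ⊗ₜ[k] w i)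
    (u : C ⊗[k] D →ₗ[k] A) (g : C ⊗[k] D →ₗ[k] E) :
    act u g (c ⊗ₜ d) = ∑ i ∈ s, ∑ j ∈ t, u (x i ⊗ₜ z j) • g (y i ⊗ₜ w j) := by
  rw [act_sum _ _ _ _ (comul_tmul_sum s x y c h t z w d h'), Finset.sum_product]

/-- pushing a twisted-linear operator through `act`. -/
lemma push (S : C →ₗ[k] A →ₗ[k] A) (P : C →ₗ[k] E →ₗ[k] E)
    (hP : ∀ a y, P.flip (a • y) = act (S.flip a) (P.flip y))
    (u : D →ₗ[k] A) (g : D →ₗ[k] E) (c : C) (d : D) :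
    P c (act u g d) =
      act (TensorProduct.lift (S.compl₂ u)) (TensorProduct.lift (P.compl₂ g)) (c ⊗ₜ d) := by
  let r := Coalgebra.Repr.arbitrary k c
  let q := Coalgebra.Repr.arbitrary k d
  rw [act_tmul_sum _ _ _ _ r.eq.symm _ _ _ _ q.eq.symm, act_sum _ _ _ _ q.eq.symm, map_sum,
    Finset.sum_comm]
  refine Finset.sum_congr rfl fun j _ => ?_
  have := congr($(hP (u (q.left j)) (g (q.right j))) c)
  rw [act_sum _ _ _ _ r.eq.symm] at this
  simpa using this

lemma act_right (u : C →ₗ[k] A) (g : C ⊗[k] D →ₗ[k] E) (c : C) (d : D) :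
    act (u ∘ₗ (TensorProduct.rid k C).toLinearMap ∘ₗ Coalgebra.counit.lTensor C) g (c ⊗ₜ d)
      = act u ((TensorProduct.curry g).flip d) c := by
  let r := Coalgebra.Repr.arbitrary k c
  let q := Coalgebra.Repr.arbitrary k d
  rw [act_tmul_sum _ _ _ _ r.eq.symm _ _ _ _ q.eq.symm, act_sum _ _ _ _ r.eq.symm]
  refine Finset.sum_congr rfl fun i _ => ?_
  have h := congr(g (r.right i ⊗ₜ[k] $(Coalgebra.sum_counit_smul (R := k) q)))
  simp only [TensorProduct.tmul_sum, map_sum, TensorProduct.tmul_smul, map_smul] at h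
  simp only [LinearMap.flip_apply, TensorProduct.curry_apply, ← h, Finset.smul_sum]
  refine Finset.sum_congr rfl fun j _ => ?_
  simp only [LinearMap.comp_apply, LinearMap.lTensor_tmul, LinearEquiv.coe_coe,
    TensorProduct.rid_tmul, map_smul, smul_assoc]
  rw [smul_comm]

end general

section specific
variable {k A H : Type*} [CommRing k] [Ring A] [Algebra k A] [Ring H] [HopfAlgebra k H]
    (σ : H →ₗ[k] A →ₗ[k] A) (f : H →ₗ[k] H →ₗ[k] A)
    (n : H → ℕ) (c₁ c₂ : H → ℕ → H)

/-- `h ⊗ l ↦ f(h⁽¹⁾, l⁽¹⁾) # h⁽²⁾ l⁽²⁾`. -/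
def mm : H ⊗[k] H →ₗ[k] A ⊗[k] H :=
  act (TensorProduct.lift f) (gam k A H ∘ₗ (Bialgebra.mulCoalgHom k H).toLinearMap)

/-- left multiplication by `1 # h`. -/
def pp : H →ₗ[k] (A ⊗[k] H) →ₗ[k] (A ⊗[k] H) := crossedMul k A H σ f ∘ₗ gam k A H

/-- `h ↦ mm (h ⊗ l)`. -/
def mmr (l : H) : H →ₗ[k] A ⊗[k] H := (TensorProduct.curry (mm f)).flip l

lemma act_add_right {C E : Type*} [AddCommGroup C] [Module k C] [Coalgebra k C]
    [AddCommGroup E] [Module k E] [Module A E] [IsScalarTower k A E]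
    (u : C →ₗ[k] A) (g g' : C →ₗ[k] E) : act u (g + g') = act u g + act u g' := by
  ext c
  let r := Coalgebra.Repr.arbitrary k c
  simp [act_sum _ _ _ _ r.eq.symm, Finset.sum_add_distrib]

lemma act_sum_right {C E ι : Type*} [AddCommGroup C] [Module k C] [Coalgebra k C]
    [AddCommGroup E] [Module k E] [Module A E] [IsScalarTower k A E]
    (u : C →ₗ[k] A) (s : Finset ι) (g : ι → C →ₗ[k] E) :
    act u (∑ i ∈ s, g i) = ∑ i ∈ s, act u (g i) := by
  classical
  induction s using Finset.induction_on with
  | empty =>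
    ext c
    let r := Coalgebra.Repr.arbitrary k c
    simp [act_sum _ _ _ _ r.eq.symm]
  | insert a s ha ih => rw [Finset.sum_insert ha, Finset.sum_insert ha, act_add_right, ih]

lemma crossedMul_tmul (a b : A) (h l : H) :
    crossedMul k A H σ f (a ⊗ₜ h) (b ⊗ₜ l) = a • act (σ.flip b) (mmr f l) h := by
  let r := Coalgebra.Repr.arbitrary k h
  let q := Coalgebra.Repr.arbitrary k l
  have h1 : mmr f l = ∑ j ∈ q.index, act (f.flip (q.left j))
      (gam k A H ∘ₗ LinearMap.mulRight k (q.right j)) := by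
    ext x
    let r := Coalgebra.Repr.arbitrary k x
    simp only [mmr, LinearMap.flip_apply, TensorProduct.curry_apply, mm, LinearMap.sum_apply]
    rw [act_tmul_sum _ _ _ _ r.eq.symm _ _ _ _ q.eq.symm, Finset.sum_comm]
    refine Finset.sum_congr rfl fun j _ => ?_
    rw [act_sum _ _ _ _ r.eq.symm]
    rfl
  rw [h1, act_sum_right]
  simp only [← act_act, LinearMap.sum_apply]
  simp only [act_sum _ _ _ _ r.eq.symm,
    act_sum _ _ _ _ (Coalgebra.Repr.arbitrary k (r.left _)).eq.symm]
  simp only [crossedMul, TensorProduct.lift.tmul, LinearMap.compl₂_apply, LinearMap.comp_apply,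
    LinearMap.llcomp_apply, TensorProduct.curry_apply, TensorProduct.map_tmul, ← r.eq,
    LinearMap.lTensor_tmul, ← q.eq, map_sum, LinearMap.rTensor_tmul, LinearEquiv.coe_coe,
    TensorProduct.tmul_sum, TensorProduct.sum_tmul, TensorProduct.assoc_symm_tmul,
    ← (Coalgebra.Repr.arbitrary k (r.left _)).eq, TensorProduct.tensorTensorTensorComm_tmul,
    LinearMap.mul'_apply, Finset.smul_sum, Finset.sum_smul]
  simp [gam, TensorProduct.smul_tmul']

lemma gam_smul (a : A) (h : H) : a • gam k A H h = a ⊗ₜ h := by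
  simp [gam, TensorProduct.smul_tmul']

lemma cm_smul (a : A) (x y : A ⊗[k] H) :
    crossedMul k A H σ f (a • x) y = a • crossedMul k A H σ f x y := by
  induction x using TensorProduct.induction_on with
  | zero => simp
  | add x x' hx hx' => simp only [smul_add, map_add, LinearMap.add_apply, hx, hx']
  | tmul c h =>
    induction y using TensorProduct.induction_on with
    | zero => simp
    | add x x' hx hx' => simp only [smul_add, map_add, hx, hx']
    | tmul b l => rw [TensorProduct.smul_tmul', crossedMul_tmul, crossedMul_tmul, smul_eq_mul,
        mul_smul]

/-- right multiplication as an `A`-linear map -/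
def rmulA (y : A ⊗[k] H) : A ⊗[k] H →ₗ[A] A ⊗[k] H where
  toFun x := crossedMul k A H σ f x y
  map_add' := by simp
  map_smul' a x := cm_smul σ f a x y

/-- `id ⊗ ε`, `A`-linear. -/
def proj (k A H : Type*) [CommRing k] [Ring A] [Algebra k A] [Ring H] [HopfAlgebra k H] :
    A ⊗[k] H →ₗ[k] A :=
  (TensorProduct.rid k A).toLinearMap ∘ₗ (Coalgebra.counit (R := k)).lTensor A

def projA (k A H : Type*) [CommRing k] [Ring A] [Algebra k A] [Ring H] [HopfAlgebra k H] :
    A ⊗[k] H →ₗ[A] A where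
  toFun := proj k A H
  map_add' := by simp
  map_smul' a x := by
    induction x using TensorProduct.induction_on with
    | zero => simp
    | add x y hx hy => simp only [smul_add, map_add, hx, hy]
    | tmul b h => simp [proj, TensorProduct.smul_tmul']

/-- `act u (γ ∘ φ)` determines `u`, for `φ` a coalgebra map. -/
lemma proj_act {C : Type*} [AddCommGroup C] [Module k C] [Coalgebra k C] (u : C →ₗ[k] A)
    (φ : C →ₗc[k] H) : proj k A H ∘ₗ act u (gam k A H ∘ₗ φ.toLinearMap) = u := by
  rw [comp_act (projA k A H) _ _ _ (fun _ => rfl)]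
  have : proj k A H ∘ₗ gam k A H ∘ₗ φ.toLinearMap = eps k A C := by
    ext c
    simp [proj, gam, eps_apply]
  rw [this, act_eps]

lemma pp_tmul (h : H) (b : A) (l : H) :
    pp σ f h (b ⊗ₜ l) = act (σ.flip b) (mmr f l) h := by
  simp [pp, gam, crossedMul_tmul]

lemma sigma_mul (hrep : IsSweedlerRep k H n c₁ c₂)
    (hweak : IsWeakAction k A H n c₁ c₂ σ) (a b : A) : σ.flip (a * b) = act (σ.flip a) (σ.flip b) := by
  ext h
  rw [act_sum _ _ _ _ (hrep h)]
  exact hweak.1 h a b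

lemma sigma_one (hweak : IsWeakAction k A H n c₁ c₂ σ) : σ.flip (1 : A) = eps k A H := by
  ext h
  rw [eps_apply]
  exact hweak.2.1 h

lemma hP (hrep : IsSweedlerRep k H n c₁ c₂)
    (hweak : IsWeakAction k A H n c₁ c₂ σ) (a : A) (y : A ⊗[k] H) :
    (pp σ f).flip (a • y) = act (σ.flip a) ((pp σ f).flip y) := by
  induction y using TensorProduct.induction_on with
  | zero =>
    have := act_sum_right (σ.flip a) (∅ : Finset ℕ) (fun _ => (pp σ f).flip 0)
    simpa using this.symm
  | add x y hx hy => simp only [smul_add, map_add, hx, hy, act_add_right]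
  | tmul b l =>
    have h (b : A) : (pp σ f).flip (b ⊗ₜ l) = act (σ.flip b) (mmr f l) := by
      ext h; exact pp_tmul σ f h b l
    rw [TensorProduct.smul_tmul', smul_eq_mul, h, h, sigma_mul σ n c₁ c₂ hrep hweak, act_act]

lemma pp_gam (hweak : IsWeakAction k A H n c₁ c₂ σ) (h l : H) : pp σ f h (gam k A H l) = mm f (h ⊗ₜ l) := by
  change pp σ f h (1 ⊗ₜ l) = _
  rw [pp_tmul, sigma_one σ n c₁ c₂ hweak, eps_act]
  rfl

/-- The multiplication coalgebra map. -/
abbrev mu (k H : Type*) [CommRing k] [Ring H] [HopfAlgebra k H] : H ⊗[k] H →ₗc[k] H :=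
  Bialgebra.mulCoalgHom k H

def kk (y : A ⊗[k] H) : H ⊗[k] H →ₗ[k] A ⊗[k] H := (crossedMul k A H σ f).flip y ∘ₗ mm f

def gg (y : A ⊗[k] H) : H ⊗[k] H →ₗ[k] A ⊗[k] H :=
  TensorProduct.lift ((pp σ f).compl₂ ((pp σ f).flip y))

lemma kk_eq (y : A ⊗[k] H) :
    kk σ f y = act (TensorProduct.lift f) ((pp σ f).flip y ∘ₗ (mu k H).toLinearMap) := by
  rw [kk, mm, comp_act (rmulA σ f y) _ _ _ (fun _ => rfl)]
  rfl

lemma kk_smul (hrep : IsSweedlerRep k H n c₁ c₂)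
    (hweak : IsWeakAction k A H n c₁ c₂ σ) (b : A) (y : A ⊗[k] H) :
    kk σ f (b • y) = act (act (TensorProduct.lift f) (σ.flip b ∘ₗ (mu k H).toLinearMap))
      ((pp σ f).flip y ∘ₗ (mu k H).toLinearMap) := by
  rw [kk_eq, hP σ f n c₁ c₂ hrep hweak, act_comp, act_act]

lemma gg_smul (hrep : IsSweedlerRep k H n c₁ c₂)
    (hweak : IsWeakAction k A H n c₁ c₂ σ) (b : A) (y : A ⊗[k] H) :
    gg σ f (b • y) = act (TensorProduct.lift (σ.compl₂ (σ.flip b))) (gg σ f y) := by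
  refine TensorProduct.ext' fun h l => ?_
  rw [gg, gg, ← push σ (pp σ f) (hP σ f n c₁ c₂ hrep hweak)]
  rw [TensorProduct.lift.tmul, LinearMap.compl₂_apply, hP σ f n c₁ c₂ hrep hweak]

lemma twisted_iff (hrep : IsSweedlerRep k H n c₁ c₂) : IsTwistedModule k A H n c₁ c₂ σ f ↔
    ∀ b, act (TensorProduct.lift (σ.compl₂ (σ.flip b))) (TensorProduct.lift f) =
      act (TensorProduct.lift f) (σ.flip b ∘ₗ (mu k H).toLinearMap) := by
  have e (h l : H) (b : A) :
      act (TensorProduct.lift (σ.compl₂ (σ.flip b))) (TensorProduct.lift f) (h ⊗ₜ[k] l) =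
      ∑ i ∈ Finset.range (n h), ∑ j ∈ Finset.range (n l),
      σ (c₁ h i) (σ (c₁ l j) b) * f (c₂ h i) (c₂ l j) := by
    rw [act_tmul_sum _ _ _ _ (hrep h) _ _ _ _ (hrep l)]; rfl
  have e' (h l : H) (b : A) :
      act (TensorProduct.lift f) (σ.flip b ∘ₗ (mu k H).toLinearMap) (h ⊗ₜ[k] l) =
      ∑ i ∈ Finset.range (n h), ∑ j ∈ Finset.range (n l),
      f (c₁ h i) (c₁ l j) * σ (c₂ h i * c₂ l j) b := by
    rw [act_tmul_sum _ _ _ _ (hrep h) _ _ _ _ (hrep l)]; rfl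
  constructor
  · intro H b
    refine TensorProduct.ext' fun h l => ?_
    rw [e, e', H]
  · intro H h l b
    rw [← e, ← e', H]

def UU : H ⊗[k] (H ⊗[k] H) →ₗ[k] A := TensorProduct.lift (σ.compl₂ (TensorProduct.lift f))

def phi1 (k H : Type*) [CommRing k] [Ring H] [HopfAlgebra k H] :
    H ⊗[k] (H ⊗[k] H) →ₗc[k] H ⊗[k] H :=
  Coalgebra.TensorProduct.map (CoalgHom.id k H) (mu k H)

def phi2 (k H : Type*) [CommRing k] [Ring H] [HopfAlgebra k H] :
    (H ⊗[k] H) ⊗[k] H →ₗc[k] H ⊗[k] H :=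
  Coalgebra.TensorProduct.map (mu k H) (CoalgHom.id k H)

def alp (k H : Type*) [CommRing k] [Ring H] [HopfAlgebra k H] :
    H ⊗[k] (H ⊗[k] H) →ₗc[k] (H ⊗[k] H) ⊗[k] H :=
  ((Coalgebra.TensorProduct.assoc k k H H H).symm : _ →ₗc[k] _)

def VV : H ⊗[k] (H ⊗[k] H) →ₗ[k] A := TensorProduct.lift f ∘ₗ (phi1 k H).toLinearMap

def WW : (H ⊗[k] H) ⊗[k] H →ₗ[k] A :=
  TensorProduct.lift f ∘ₗ
    (TensorProduct.rid k (H ⊗[k] H)).toLinearMap ∘ₗ Coalgebra.counit.lTensor (H ⊗[k] H)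

def ZZ : (H ⊗[k] H) ⊗[k] H →ₗ[k] A := TensorProduct.lift f ∘ₗ (phi2 k H).toLinearMap

lemma cocycle_iff (hrep : IsSweedlerRep k H n c₁ c₂) : IsCocycle k A H n c₁ c₂ σ f ↔
    act (UU σ f) (VV f) = act (WW f) (ZZ f) ∘ₗ (alp k H).toLinearMap := by
  have e (h l m : H) : act (UU σ f) (VV f) (h ⊗ₜ[k] (l ⊗ₜ[k] m)) =
      ∑ i ∈ Finset.range (n h), ∑ j ∈ Finset.range (n l), ∑ p ∈ Finset.range (n m),
      σ (c₁ h i) (f (c₁ l j) (c₁ m p)) * f (c₂ h i) (c₂ l j * c₂ m p) := by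
    rw [act_tmul_sum _ _ _ _ (hrep h) _ _ _ _
      (comul_tmul_sum _ _ _ _ (hrep l) _ _ _ _ (hrep m))]
    simp only [Finset.sum_product]
    rfl
  have e' (h l m : H) : (act (WW f) (ZZ f) ∘ₗ (alp k H).toLinearMap) (h ⊗ₜ[k] (l ⊗ₜ[k] m)) =
      ∑ i ∈ Finset.range (n h), ∑ j ∈ Finset.range (n l),
      f (c₁ h i) (c₁ l j) * f (c₂ h i * c₂ l j) m := by
    change act (WW f) (ZZ f) ((h ⊗ₜ[k] l) ⊗ₜ[k] m) = _
    rw [WW, act_right, act_tmul_sum _ _ _ _ (hrep h) _ _ _ _ (hrep l)]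
    rfl
  constructor
  · intro H
    refine TensorProduct.ext_threefold' fun h l m => ?_
    rw [e, e', H]
  · intro H h l m
    rw [← e, ← e', H]

lemma gg_gam (hrep : IsSweedlerRep k H n c₁ c₂)
    (hweak : IsWeakAction k A H n c₁ c₂ σ) (h l m : H) : gg σ f (gam k A H m) (h ⊗ₜ l) =
    act (act (UU σ f) (VV f)) (gam k A H ∘ₗ ((mu k H).comp (phi1 k H)).toLinearMap)
      (h ⊗ₜ[k] (l ⊗ₜ[k] m)) := by
  have h1 : gg σ f (gam k A H m) (h ⊗ₜ l) = pp σ f h (mm f (l ⊗ₜ m)) := by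
    rw [← pp_gam σ f n c₁ c₂ hweak]; rfl
  rw [h1, mm, push σ (pp σ f) (hP σ f n c₁ c₂ hrep hweak), act_act]
  have h2 : TensorProduct.lift ((pp σ f).compl₂ (gam k A H ∘ₗ (mu k H).toLinearMap)) =
      mm f ∘ₗ (phi1 k H).toLinearMap := by
    refine TensorProduct.ext_threefold' fun h l m => ?_
    exact pp_gam σ f n c₁ c₂ hweak h (l * m)
  rw [h2, mm, act_comp]
  rfl

lemma kk_gam (hweak : IsWeakAction k A H n c₁ c₂ σ) (h l m : H) : kk σ f (gam k A H m) (h ⊗ₜ l) =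
    act (act (WW f) (ZZ f)) (gam k A H ∘ₗ ((mu k H).comp (phi2 k H)).toLinearMap)
      ((h ⊗ₜ[k] l) ⊗ₜ[k] m) := by
  have h2 : act (ZZ f) (gam k A H ∘ₗ ((mu k H).comp (phi2 k H)).toLinearMap) =
      mm f ∘ₗ (phi2 k H).toLinearMap := by
    rw [mm, act_comp]; rfl
  rw [act_act, h2, WW, act_right, kk_eq]
  congr 2
  refine TensorProduct.ext' fun h l => ?_
  exact pp_gam σ f n c₁ c₂ hweak (h * l) m

lemma gam_iff (hrep : IsSweedlerRep k H n c₁ c₂)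
    (hweak : IsWeakAction k A H n c₁ c₂ σ) : (∀ m, kk σ f (gam k A H m) = gg σ f (gam k A H m)) ↔
    IsCocycle k A H n c₁ c₂ σ f := by
  rw [cocycle_iff σ f n c₁ c₂ hrep]
  have hphi : ((mu k H).comp (phi2 k H)).toLinearMap ∘ₗ (alp k H).toLinearMap =
      ((mu k H).comp (phi1 k H)).toLinearMap := by
    refine TensorProduct.ext_threefold' fun h l m => ?_
    exact mul_assoc h l m
  have h3 : act (act (WW f) (ZZ f)) (gam k A H ∘ₗ ((mu k H).comp (phi2 k H)).toLinearMap)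
      ∘ₗ (alp k H).toLinearMap = act (act (WW f) (ZZ f) ∘ₗ (alp k H).toLinearMap)
        (gam k A H ∘ₗ ((mu k H).comp (phi1 k H)).toLinearMap) := by
    rw [act_comp, LinearMap.comp_assoc, hphi]
  constructor
  · intro hh
    have h4 : act (act (UU σ f) (VV f)) (gam k A H ∘ₗ ((mu k H).comp (phi1 k H)).toLinearMap) =
        act (act (WW f) (ZZ f) ∘ₗ (alp k H).toLinearMap)
        (gam k A H ∘ₗ ((mu k H).comp (phi1 k H)).toLinearMap) := by
      rw [← h3]
      refine TensorProduct.ext_threefold' fun h l m => ?_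
      rw [← gg_gam σ f n c₁ c₂ hrep hweak, ← hh, kk_gam σ f n c₁ c₂ hweak]
      rfl
    rw [← proj_act (act (UU σ f) (VV f)) ((mu k H).comp (phi1 k H)), h4, proj_act]
  · intro hh m
    refine TensorProduct.ext' fun h l => ?_
    rw [gg_gam σ f n c₁ c₂ hrep hweak, kk_gam σ f n c₁ c₂ hweak, hh, ← h3]
    rfl

lemma assoc_iff (hrep : IsSweedlerRep k H n c₁ c₂)
    (hweak : IsWeakAction k A H n c₁ c₂ σ) : (∀ x y z : A ⊗[k] H,
        crossedMul k A H σ f (crossedMul k A H σ f x y) z =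
          crossedMul k A H σ f x (crossedMul k A H σ f y z)) ↔ ∀ y, kk σ f y = gg σ f y := by
  constructor
  · intro hh y
    refine TensorProduct.ext' fun h l => ?_
    have := hh (gam k A H h) (gam k A H l) y
    change crossedMul k A H σ f (pp σ f h (gam k A H l)) y = _ at this
    rw [pp_gam σ f n c₁ c₂ hweak] at this
    exact this
  · intro hh x y z
    induction x using TensorProduct.induction_on with
    | zero => simp
    | add x x' hx hx' => simp only [map_add, LinearMap.add_apply, hx, hx']
    | tmul a h =>
      induction y using TensorProduct.induction_on with
      | zero => simp
      | add x x' hx hx' => simp only [map_add, LinearMap.add_apply, hx, hx']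
      | tmul b l =>
        rw [← gam_smul a, ← gam_smul b]
        simp only [cm_smul]
        congr 1
        have h1 : crossedMul k A H σ f (pp σ f h (b • gam k A H l)) z =
            (((crossedMul k A H σ f).flip z) ∘ₗ ((pp σ f).flip (b • gam k A H l))) h := rfl
        have h2 : (pp σ f h (b • pp σ f l z)) = (pp σ f).flip (b • pp σ f l z) h := rfl
        change crossedMul k A H σ f (pp σ f h (b • gam k A H l)) z = pp σ f h (b • pp σ f l z)
        rw [h1, h2, hP σ f n c₁ c₂ hrep hweak, hP σ f n c₁ c₂ hrep hweak,
          comp_act (rmulA σ f z) _ _ _ (fun _ => rfl)]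
        congr 2
        ext h
        have h3 := congr($(hh z) (h ⊗ₜ[k] l))
        change crossedMul k A H σ f (pp σ f h (gam k A H l)) z = _
        rw [pp_gam σ f n c₁ c₂ hweak]
        exact h3

lemma mm_one_left (l : H) : mm f (1 ⊗ₜ l) = act (f 1) (gam k A H) l := by
  let r := Coalgebra.Repr.arbitrary k l
  have h1 : Coalgebra.comul (R := k) (1 : H) = ∑ i ∈ ({0} : Finset ℕ), (1 : H) ⊗ₜ[k] (1 : H) := by
    simp [Algebra.TensorProduct.one_def]
  rw [mm, act_tmul_sum _ _ _ _ h1 _ _ _ _ r.eq.symm, act_sum _ _ _ _ r.eq.symm]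
  simp

lemma mm_one_right (l : H) : mm f (l ⊗ₜ 1) = act (f.flip 1) (gam k A H) l := by
  let r := Coalgebra.Repr.arbitrary k l
  have h1 : Coalgebra.comul (R := k) (1 : H) = ∑ i ∈ ({0} : Finset ℕ), (1 : H) ⊗ₜ[k] (1 : H) := by
    simp [Algebra.TensorProduct.one_def]
  rw [mm, act_tmul_sum _ _ _ _ r.eq.symm _ _ _ _ h1, act_sum _ _ _ _ r.eq.symm]
  simp

lemma act_gam_iff (u : H →ₗ[k] A) : (∀ h, act u (gam k A H) h = gam k A H h) ↔
    ∀ h, u h = Coalgebra.counit (R := k) h • (1 : A) := by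
  constructor
  · intro hh h
    have e : act u (gam k A H) = act (eps k A H) (gam k A H) := by
      rw [eps_act]; ext h; exact hh h
    have p (u : H →ₗ[k] A) : proj k A H ∘ₗ act u (gam k A H) = u := proj_act u (CoalgHom.id k H)
    rw [← p u, e, p, eps_apply]
  · intro hh h
    have : u = eps k A H := by ext h; rw [hh, eps_apply]
    rw [this, eps_act]

lemma unit_iff (hrep : IsSweedlerRep k H n c₁ c₂)
    (hweak : IsWeakAction k A H n c₁ c₂ σ) : (∀ x : A ⊗[k] H,
        crossedMul k A H σ f (oneE k A H) x = x ∧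
          crossedMul k A H σ f x (oneE k A H) = x) ↔ IsNormal k A H f := by
  have hl (b : A) (l : H) : crossedMul k A H σ f (oneE k A H) (b • gam k A H l) =
      b • act (f 1) (gam k A H) l := by
    change (pp σ f).flip (b • gam k A H l) 1 = _
    rw [hP σ f n c₁ c₂ hrep hweak, ← mm_one_left, ← pp_gam σ f n c₁ c₂ hweak]
    simp [act, Algebra.TensorProduct.one_def, hweak.2.2]
  have hr (b : A) (l : H) : crossedMul k A H σ f (b • gam k A H l) (oneE k A H) =
      b • act (f.flip 1) (gam k A H) l := by
    rw [cm_smul, ← mm_one_right, ← pp_gam σ f n c₁ c₂ hweak]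
    rfl
  have key : IsNormal k A H f ↔ (∀ h, act (f.flip 1) (gam k A H) h = gam k A H h) ∧
      ∀ h, act (f 1) (gam k A H) h = gam k A H h := by
    rw [act_gam_iff, act_gam_iff, ← forall_and]
    rfl
  rw [key]
  constructor
  · intro hh
    refine ⟨fun h => ?_, fun h => ?_⟩
    · have := (hh ((1 : A) • gam k A H h)).2
      rwa [hr, one_smul, one_smul] at this
    · have := (hh ((1 : A) • gam k A H h)).1
      rwa [hl, one_smul, one_smul] at this
  · intro hh x
    induction x using TensorProduct.induction_on with
    | zero => simp
    | add x y hx hy => simp only [map_add, LinearMap.add_apply, hx, hy, and_self]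
    | tmul a h => rw [← gam_smul, hl, hr, hh.1, hh.2]; exact ⟨rfl, rfl⟩

lemma main_aux (hrep : IsSweedlerRep k H n c₁ c₂)
    (hweak : IsWeakAction k A H n c₁ c₂ σ) : ((∀ x y z : A ⊗[k] H,
        crossedMul k A H σ f (crossedMul k A H σ f x y) z =
          crossedMul k A H σ f x (crossedMul k A H σ f y z)) ∧
      (∀ x : A ⊗[k] H,
        crossedMul k A H σ f (oneE k A H) x = x ∧
          crossedMul k A H σ f x (oneE k A H) = x)) ↔
    (IsNormal k A H f ∧ IsCocycle k A H n c₁ c₂ σ f ∧ IsTwistedModule k A H n c₁ c₂ σ f) := by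
  rw [and_comm]
  constructor
  · rintro ⟨hu, ha⟩
    have ha' := (assoc_iff σ f n c₁ c₂ hrep hweak).1 ha
    refine ⟨(unit_iff σ f n c₁ c₂ hrep hweak).1 hu,
      (gam_iff σ f n c₁ c₂ hrep hweak).1 fun m => ha' _, ?_⟩
    rw [twisted_iff σ f n c₁ c₂ hrep]
    intro b
    have h1 : (pp σ f).flip (oneE k A H) = gam k A H := by
      ext h; exact (hu (gam k A H h)).2
    have h2 := ha' (b • oneE k A H)
    rw [kk_smul σ f n c₁ c₂ hrep hweak, gg_smul σ f n c₁ c₂ hrep hweak, ← ha', kk_eq, ← act_act,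
      h1] at h2
    rw [← proj_act (act (TensorProduct.lift (σ.compl₂ (σ.flip b))) (TensorProduct.lift f)) (mu k H),
      ← h2, proj_act]
  · rintro ⟨hn, hc, ht⟩
    refine ⟨(unit_iff σ f n c₁ c₂ hrep hweak).2 hn, (assoc_iff σ f n c₁ c₂ hrep hweak).2 ?_⟩
    have hc' := (gam_iff σ f n c₁ c₂ hrep hweak).2 hc
    rw [twisted_iff σ f n c₁ c₂ hrep] at ht
    intro y
    induction y using TensorProduct.induction_on with
    | zero => ext; simp [kk, gg]
    | add x y hx hy =>
      refine TensorProduct.ext' fun h l => ?_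
      have e1 := congr($hx (h ⊗ₜ[k] l))
      have e2 := congr($hy (h ⊗ₜ[k] l))
      simp only [kk, gg, LinearMap.comp_apply, LinearMap.flip_apply, TensorProduct.lift.tmul,
        LinearMap.compl₂_apply, map_add, LinearMap.add_apply] at e1 e2 ⊢
      rw [e1, e2]
    | tmul b m =>
      rw [← gam_smul, kk_smul σ f n c₁ c₂ hrep hweak, gg_smul σ f n c₁ c₂ hrep hweak, ← hc', ← ht,
        kk_eq, act_act]

end specific
end
end CPA

/-- Let `H` be a Hopf `k`-algebra weakly acting on a `k`-algebra `A` and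
`f : H ⊗ H → A` a `k`-linear map.  The algebra `A #_f H` is associative with `1 # 1` as
identity element if and only if `f` is normal, satisfies the cocycle condition, and the
twisted module condition holds. -/
theorem crossed_product_associative_iff
    (k A H : Type*) [CommRing k] [Ring A] [Algebra k A] [Ring H] [HopfAlgebra k H]
    (σ : H →ₗ[k] A →ₗ[k] A) (f : H →ₗ[k] H →ₗ[k] A)
    (n : H → ℕ) (c₁ c₂ : H → ℕ → H)
    (hrep : IsSweedlerRep k H n c₁ c₂)
    (hweak : IsWeakAction k A H n c₁ c₂ σ) :
    ((∀ x y z : A ⊗[k] H,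
        crossedMul k A H σ f (crossedMul k A H σ f x y) z =
          crossedMul k A H σ f x (crossedMul k A H σ f y z)) ∧
      (∀ x : A ⊗[k] H,
        crossedMul k A H σ f (oneE k A H) x = x ∧
          crossedMul k A H σ f x (oneE k A H) = x)) ↔
    (IsNormal k A H f ∧ IsCocycle k A H n c₁ c₂ σ f ∧ IsTwistedModule k A H n c₁ c₂ σ f) := by
  exact CPA.main_aux σ f n c₁ c₂ hrep hweak
end

section
/- Assume conditions (i)–(iii) hold, so E = A #_f H is a crossed product, and assume f is convolution invertible with inverse f^{-1}. Then the map γ : H → E, γ(h) = 1#h, is convolution invertible in the convolution algebra Hom_k(H, E) (with product (u * v)(h) = u(h^{(1)}) v(h^{(2)}) and unit h ↦ ε(h)1_E), and its convolution inverse is given by γ^{-1}(h) = f^{-1}(S(h^{(2)}), h^{(3)}) # S(h^{(1)}). -/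
open TensorProduct

namespace GammaAux

open Coalgebra HopfAlgebra

section Tensors

variable {k H : Type*} [CommRing k] [Ring H] [HopfAlgebra k H]
  {n : H → ℕ} {c₁ c₂ : H → ℕ → H}

theorem coassoc_sum (hrep : IsSweedlerRep k H n c₁ c₂) (h : H) :
    ∑ i ∈ Finset.range (n h), ∑ j ∈ Finset.range (n (c₁ h i)),
      c₁ (c₁ h i) j ⊗ₜ[k] (c₂ (c₁ h i) j ⊗ₜ[k] c₂ h i) =
    ∑ i ∈ Finset.range (n h), ∑ j ∈ Finset.range (n (c₂ h i)),
      c₁ h i ⊗ₜ[k] (c₁ (c₂ h i) j ⊗ₜ[k] c₂ (c₂ h i) j) := by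
  have hr : ∀ h : H, comul (R := k) h = ∑ i ∈ Finset.range (n h), c₁ h i ⊗ₜ[k] c₂ h i := hrep
  have := Coalgebra.coassoc_apply (R := k) h
  rw [hr h] at this
  simpa [map_sum, hr, TensorProduct.sum_tmul, TensorProduct.tmul_sum] using this

theorem coassoc_map {M : Type*} [AddCommMonoid M] [Module k M]
    (hrep : IsSweedlerRep k H n c₁ c₂) (T : H ⊗[k] (H ⊗[k] H) →ₗ[k] M) (h : H) :
    ∑ i ∈ Finset.range (n h), ∑ j ∈ Finset.range (n (c₁ h i)),
      T (c₁ (c₁ h i) j ⊗ₜ[k] (c₂ (c₁ h i) j ⊗ₜ[k] c₂ h i)) =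
    ∑ i ∈ Finset.range (n h), ∑ j ∈ Finset.range (n (c₂ h i)),
      T (c₁ h i ⊗ₜ[k] (c₁ (c₂ h i) j ⊗ₜ[k] c₂ (c₂ h i) j)) := by
  simpa [map_sum] using congrArg T (coassoc_sum hrep h)

theorem counit_left (hrep : IsSweedlerRep k H n c₁ c₂) (h : H) :
    ∑ i ∈ Finset.range (n h), counit (R := k) (c₁ h i) • c₂ h i = h := by
  have := congrArg (TensorProduct.lid k H) (Coalgebra.rTensor_counit_comul (R := k) h)
  rw [hrep h] at this
  simpa [map_sum] using this

theorem counit_right (hrep : IsSweedlerRep k H n c₁ c₂) (h : H) :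
    ∑ i ∈ Finset.range (n h), counit (R := k) (c₂ h i) • c₁ h i = h := by
  have := congrArg (TensorProduct.rid k H) (Coalgebra.lTensor_counit_comul (R := k) h)
  rw [hrep h] at this
  simpa [map_sum] using this

theorem counit_left_map {M : Type*} [AddCommMonoid M] [Module k M]
    (hrep : IsSweedlerRep k H n c₁ c₂) (T : H →ₗ[k] M) (h : H) :
    ∑ i ∈ Finset.range (n h), counit (R := k) (c₁ h i) • T (c₂ h i) = T h := by
  simpa [map_sum] using congrArg T (counit_left hrep h)

theorem counit_right_map {M : Type*} [AddCommMonoid M] [Module k M]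
    (hrep : IsSweedlerRep k H n c₁ c₂) (T : H →ₗ[k] M) (h : H) :
    ∑ i ∈ Finset.range (n h), counit (R := k) (c₂ h i) • T (c₁ h i) = T h := by
  simpa [map_sum] using congrArg T (counit_right hrep h)

theorem collapse (hrep : IsSweedlerRep k H n c₁ c₂) (m : H ⊗[k] H →ₗ[k] H)
    (hm : ∀ x, m (comul (R := k) x) = counit (R := k) x • (1 : H)) (h : H) :
    ∑ i ∈ Finset.range (n h), ∑ j ∈ Finset.range (n (c₁ h i)),
      ∑ l ∈ Finset.range (n (c₂ h i)),
      c₁ (c₁ h i) j ⊗ₜ[k] (m (c₂ (c₁ h i) j ⊗ₜ[k] c₁ (c₂ h i) l) ⊗ₜ[k] c₂ (c₂ h i) l) =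
    ∑ i ∈ Finset.range (n h), c₁ h i ⊗ₜ[k] ((1 : H) ⊗ₜ[k] c₂ h i) := by
  have hr : ∀ h : H, comul (R := k) h = ∑ i ∈ Finset.range (n h), c₁ h i ⊗ₜ[k] c₂ h i := hrep
  let T0 : H ⊗[k] H →ₗ[k] H ⊗[k] H :=
    (LinearMap.rTensor H m) ∘ₗ (TensorProduct.assoc k H H H).symm.toLinearMap ∘ₗ
      LinearMap.lTensor H (comul (R := k))
  have h1 := coassoc_map hrep (LinearMap.lTensor H T0) h
  have hT0 : ∀ x y : H, T0 (x ⊗ₜ y) =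
      ∑ l ∈ Finset.range (n y), m (x ⊗ₜ[k] c₁ y l) ⊗ₜ[k] c₂ y l := by
    intro x y
    simp [T0, hr, TensorProduct.tmul_sum, map_sum]
  have hT1 : ∀ y : H, T0 (comul (R := k) y) = (1 : H) ⊗ₜ[k] y := by
    intro y
    have e : T0 (comul (R := k) y) =
      LinearMap.rTensor H m (LinearMap.rTensor H (comul (R := k)) (comul (R := k) y)) := by
      simp [T0]
    rw [e, hr y]
    simp only [map_sum, LinearMap.rTensor_tmul, hm]
    simp only [TensorProduct.smul_tmul]
    rw [← TensorProduct.tmul_sum, counit_left hrep]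
  simp only [LinearMap.lTensor_tmul, hT0, TensorProduct.tmul_sum] at h1
  rw [h1]
  refine Finset.sum_congr rfl fun i _ => ?_
  rw [← hT1, hr]
  simp only [map_sum, hT0, TensorProduct.tmul_sum]

theorem four (hrep : IsSweedlerRep k H n c₁ c₂) (h : H) :
    ∑ i ∈ Finset.range (n h), ∑ j ∈ Finset.range (n (c₁ h i)),
      ∑ l ∈ Finset.range (n (c₂ (c₁ h i) j)),
      c₁ (c₁ h i) j ⊗ₜ[k] (c₁ (c₂ (c₁ h i) j) l ⊗ₜ[k] (c₂ (c₂ (c₁ h i) j) l ⊗ₜ[k] c₂ h i)) =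
    ∑ i ∈ Finset.range (n h), ∑ j ∈ Finset.range (n (c₁ h i)),
      ∑ l ∈ Finset.range (n (c₂ h i)),
      c₁ (c₁ h i) j ⊗ₜ[k] (c₂ (c₁ h i) j ⊗ₜ[k] (c₁ (c₂ h i) l ⊗ₜ[k] c₂ (c₂ h i) l)) := by
  have hr : ∀ h : H, comul (R := k) h = ∑ i ∈ Finset.range (n h), c₁ h i ⊗ₜ[k] c₂ h i := hrep
  let a := (TensorProduct.assoc k H H H).toLinearMap
  have h1 := coassoc_map hrep (LinearMap.lTensor H (LinearMap.lTensor H (comul (R := k)))) h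
  have h2 := coassoc_map hrep (LinearMap.lTensor H (a ∘ₗ LinearMap.rTensor H (comul (R := k)))) h
  simp only [LinearMap.lTensor_tmul, LinearMap.rTensor_tmul, hr, TensorProduct.tmul_sum, a,
    LinearMap.comp_apply, TensorProduct.sum_tmul, map_sum, LinearEquiv.coe_coe,
    TensorProduct.assoc_tmul] at h1 h2
  rw [h1, h2]
  refine Finset.sum_congr rfl fun i _ => ?_
  have h3 := congrArg (TensorProduct.mk k H _ (c₁ h i)) (coassoc_sum hrep (c₂ h i))
  simpa only [map_sum, TensorProduct.mk_apply] using h3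

theorem antipode_mul_sum (x : H) :
    (LinearMap.mul' k H ∘ₗ LinearMap.rTensor H (antipode k)) (comul (R := k) x)
      = counit (R := k) x • (1 : H) := by
  simp [Algebra.algebraMap_eq_smul_one]

theorem mul_antipode_sum (x : H) :
    (LinearMap.mul' k H ∘ₗ LinearMap.lTensor H (antipode k)) (comul (R := k) x)
      = counit (R := k) x • (1 : H) := by
  simp [Algebra.algebraMap_eq_smul_one]

theorem comul_antipode (hrep : IsSweedlerRep k H n c₁ c₂) (h : H) :
    comul (R := k) (antipode k h) =
      ∑ i ∈ Finset.range (n h), antipode k (c₂ h i) ⊗ₜ[k] antipode k (c₁ h i) := by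
  have hr : ∀ h : H, comul (R := k) h = ∑ i ∈ Finset.range (n h), c₁ h i ⊗ₜ[k] c₂ h i := hrep
  let N : H →ₗ[k] H ⊗[k] H := TensorProduct.map (antipode k) (antipode k) ∘ₗ
    (TensorProduct.comm k H H).toLinearMap ∘ₗ comul
  have hN : ∀ x, N x = ∑ i ∈ Finset.range (n x), antipode k (c₂ x i) ⊗ₜ[k] antipode k (c₁ x i) := by
    intro x
    simp [N, hr, map_sum]
  rw [← hN]
  suffices hh : WithConv.toConv (comul (R := k) ∘ₗ antipode k (A := H)) = WithConv.toConv N by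
    exact LinearMap.congr_fun (WithConv.toConv_injective hh) h
  apply left_inv_eq_right_inv (a := WithConv.toConv (comul (R := k) (A := H)))
  · ext x
    have e := congrArg (comul (R := k)) (antipode_mul_sum (k := k) x)
    rw [hr x] at e
    simp only [map_sum, LinearMap.comp_apply, LinearMap.rTensor_tmul, LinearMap.mul'_apply,
      Bialgebra.comul_mul, map_smul, Bialgebra.comul_one] at e
    rw [LinearMap.convMul_apply, hr x]
    simp only [map_sum, TensorProduct.map_tmul, LinearMap.mul'_apply, LinearMap.comp_apply]
    rw [e]
    simp [Algebra.algebraMap_eq_smul_one]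
  · ext x
    have e := congrArg (LinearMap.rTensor H (LinearMap.mul' k H) ∘ₗ
      (TensorProduct.assoc k H H H).symm.toLinearMap ∘ₗ
      LinearMap.lTensor H ((TensorProduct.comm k H H).toLinearMap ∘ₗ LinearMap.lTensor H (antipode k)))
      (collapse hrep _ (mul_antipode_sum (k := k)) x)
    simp only [map_sum, LinearMap.comp_apply, LinearMap.lTensor_tmul, LinearEquiv.coe_coe,
      TensorProduct.comm_tmul, TensorProduct.assoc_symm_tmul, LinearMap.rTensor_tmul,
      LinearMap.mul'_apply] at e
    have e2 := mul_antipode_sum (k := k) x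
    rw [hr x] at e2
    simp only [map_sum, LinearMap.comp_apply, LinearMap.lTensor_tmul, LinearMap.mul'_apply] at e2
    rw [← TensorProduct.sum_tmul, e2] at e
    rw [LinearMap.convMul_apply, hr x]
    simp only [map_sum, TensorProduct.map_tmul, LinearMap.mul'_apply, hN, hr (c₁ _ _),
      Finset.sum_mul, Finset.mul_sum, Algebra.TensorProduct.tmul_mul_tmul]
    rw [show (1 : WithConv (H →ₗ[k] H ⊗[k] H)) x = counit (R := k) x • (1 : H ⊗[k] H) by
      simp [Algebra.algebraMap_eq_smul_one], Algebra.TensorProduct.one_def, TensorProduct.smul_tmul', ← e]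
    refine Finset.sum_congr rfl fun i _ => ?_
    rw [Finset.sum_comm]

end Tensors

section Conv

variable {k A H : Type*} [CommRing k] [Ring A] [Algebra k A] [Ring H] [HopfAlgebra k H]
  {n : H → ℕ} {c₁ c₂ : H → ℕ → H}

theorem conv2 {B : Type*} [Ring B] [Algebra k B] (hrep : IsSweedlerRep k H n c₁ c₂)
    (P Q : WithConv (H ⊗[k] H →ₗ[k] B)) (x y : H) :
    (P * Q) (x ⊗ₜ[k] y) = ∑ i ∈ Finset.range (n x), ∑ j ∈ Finset.range (n y),
      P (c₁ x i ⊗ₜ[k] c₁ y j) * Q (c₂ x i ⊗ₜ[k] c₂ y j) := by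
  rw [LinearMap.convMul_apply, TensorProduct.comul_tmul, hrep x, hrep y]
  simp [TensorProduct.sum_tmul, TensorProduct.tmul_sum, map_sum]
  try rw [Finset.sum_comm]

theorem conv2S {B : Type*} [Ring B] [Algebra k B] (hrep : IsSweedlerRep k H n c₁ c₂)
    (P Q : WithConv (H ⊗[k] H →ₗ[k] B)) (x y : H) :
    (P * Q) (antipode k x ⊗ₜ[k] y) = ∑ i ∈ Finset.range (n x), ∑ j ∈ Finset.range (n y),
      P (antipode k (c₂ x i) ⊗ₜ[k] c₁ y j) * Q (antipode k (c₁ x i) ⊗ₜ[k] c₂ y j) := by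
  rw [LinearMap.convMul_apply, TensorProduct.comul_tmul, comul_antipode hrep x, hrep y]
  simp [TensorProduct.sum_tmul, TensorProduct.tmul_sum, map_sum]
  try rw [Finset.sum_comm]

theorem conv3 {B : Type*} [Ring B] [Algebra k B] (hrep : IsSweedlerRep k H n c₁ c₂)
    (P Q : WithConv (H ⊗[k] (H ⊗[k] H) →ₗ[k] B)) (x y z : H) :
    (P * Q) (x ⊗ₜ[k] (y ⊗ₜ[k] z)) = ∑ i ∈ Finset.range (n x), ∑ j ∈ Finset.range (n y),
      ∑ l ∈ Finset.range (n z),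
      P (c₁ x i ⊗ₜ[k] (c₁ y j ⊗ₜ[k] c₁ z l)) * Q (c₂ x i ⊗ₜ[k] (c₂ y j ⊗ₜ[k] c₂ z l)) := by
  rw [LinearMap.convMul_apply, TensorProduct.comul_tmul, TensorProduct.comul_tmul,
    hrep x, hrep y, hrep z]
  simp only [TensorProduct.sum_tmul, TensorProduct.tmul_sum, map_sum,
    TensorProduct.AlgebraTensorModule.tensorTensorTensorComm_tmul, TensorProduct.map_tmul,
    LinearMap.mul'_apply]
  rw [Finset.sum_comm_cycle]
  refine Finset.sum_congr rfl fun i _ => ?_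
  try rw [Finset.sum_comm]
  try rfl

theorem conv3S {B : Type*} [Ring B] [Algebra k B] (hrep : IsSweedlerRep k H n c₁ c₂)
    (P Q : WithConv (H ⊗[k] (H ⊗[k] H) →ₗ[k] B)) (x y z : H) :
    (P * Q) (x ⊗ₜ[k] (antipode k y ⊗ₜ[k] z)) =
      ∑ i ∈ Finset.range (n x), ∑ j ∈ Finset.range (n y), ∑ l ∈ Finset.range (n z),
      P (c₁ x i ⊗ₜ[k] (antipode k (c₂ y j) ⊗ₜ[k] c₁ z l)) *
        Q (c₂ x i ⊗ₜ[k] (antipode k (c₁ y j) ⊗ₜ[k] c₂ z l)) := by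
  rw [LinearMap.convMul_apply, TensorProduct.comul_tmul, TensorProduct.comul_tmul,
    hrep x, comul_antipode hrep y, hrep z]
  simp only [TensorProduct.sum_tmul, TensorProduct.tmul_sum, map_sum,
    TensorProduct.AlgebraTensorModule.tensorTensorTensorComm_tmul, TensorProduct.map_tmul,
    LinearMap.mul'_apply]
  rw [Finset.sum_comm_cycle]
  refine Finset.sum_congr rfl fun i _ => ?_
  try rw [Finset.sum_comm]
  try rfl

/-- `a ↦ a ⊗ 1`. -/
noncomputable def inc (k A H : Type*) [CommRing k] [Ring A] [Algebra k A] [Ring H] [HopfAlgebra k H] :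
    A →ₐ[k] A ⊗[k] H := Algebra.TensorProduct.includeLeft

/-- `x ⊗ y ↦ 1 ⊗ x y`. -/
noncomputable def theta (k A H : Type*) [CommRing k] [Ring A] [Algebra k A] [Ring H] [HopfAlgebra k H] :
    H ⊗[k] H →ₗ[k] A ⊗[k] H := TensorProduct.mk k A H 1 ∘ₗ LinearMap.mul' k H

/-- `x ⊗ y ↦ f(x₁, y₁) ⊗ x₂ y₂`. -/
noncomputable def psi (f : H →ₗ[k] H →ₗ[k] A) : H ⊗[k] H →ₗ[k] A ⊗[k] H :=
  (WithConv.toConv ((inc k A H).toLinearMap ∘ₗ TensorProduct.lift f) *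
    WithConv.toConv (theta k A H)).ofConv

theorem psi_tmul (hrep : IsSweedlerRep k H n c₁ c₂) (f : H →ₗ[k] H →ₗ[k] A) (x y : H) :
    psi f (x ⊗ₜ y) = ∑ i ∈ Finset.range (n x), ∑ j ∈ Finset.range (n y),
      f (c₁ x i) (c₁ y j) ⊗ₜ[k] (c₂ x i * c₂ y j) := by
  refine (conv2 hrep _ _ x y).trans ?_
  simp [inc, theta]

theorem crossedMul_tmul (hrep : IsSweedlerRep k H n c₁ c₂)
    (σ : H →ₗ[k] A →ₗ[k] A) (f : H →ₗ[k] H →ₗ[k] A) (a b : A) (h l : H) :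
    crossedMul k A H σ f (a ⊗ₜ h) (b ⊗ₜ l) =
      ∑ i ∈ Finset.range (n h), ((a * σ (c₁ h i) b) ⊗ₜ[k] (1 : H)) * psi f (c₂ h i ⊗ₜ l) := by
  have hr : ∀ h : H, comul (R := k) h = ∑ i ∈ Finset.range (n h), c₁ h i ⊗ₜ[k] c₂ h i := hrep
  have e1 : crossedMul k A H σ f (a ⊗ₜ h) (b ⊗ₜ l) =
      ∑ p ∈ Finset.range (n l), ∑ i ∈ Finset.range (n h), ∑ j ∈ Finset.range (n (c₁ h i)),
        (a * (σ (c₁ (c₁ h i) j) b * f (c₂ (c₁ h i) j) (c₁ l p))) ⊗ₜ[k] (c₂ h i * c₂ l p) := by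
    simp [crossedMul, hr, TensorProduct.sum_tmul, TensorProduct.tmul_sum, map_sum]
  rw [e1]
  have e2 : ∀ p, ∑ i ∈ Finset.range (n h), ∑ j ∈ Finset.range (n (c₁ h i)),
        (a * (σ (c₁ (c₁ h i) j) b * f (c₂ (c₁ h i) j) (c₁ l p))) ⊗ₜ[k] (c₂ h i * c₂ l p) =
      ∑ i ∈ Finset.range (n h), ∑ j ∈ Finset.range (n (c₂ h i)),
        (a * (σ (c₁ h i) b * f (c₁ (c₂ h i) j) (c₁ l p))) ⊗ₜ[k] (c₂ (c₂ h i) j * c₂ l p) := by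
    intro p
    have := coassoc_map hrep
      (TensorProduct.map (LinearMap.mulLeft k a ∘ₗ LinearMap.mul' k A ∘ₗ
        TensorProduct.map (σ.flip b) (f.flip (c₁ l p))) (LinearMap.mulRight k (c₂ l p)) ∘ₗ
        (TensorProduct.assoc k H H H).symm.toLinearMap) h
    simpa using this
  simp only [e2]
  rw [Finset.sum_comm]
  refine Finset.sum_congr rfl fun i _ => ?_
  rw [psi_tmul hrep, Finset.mul_sum, Finset.sum_comm]
  simp [Finset.mul_sum, mul_assoc]

theorem gammaInv_apply (hrep : IsSweedlerRep k H n c₁ c₂) (finv : H →ₗ[k] H →ₗ[k] A) (q : H) :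
    gammaInv k A H finv q = ∑ j ∈ Finset.range (n q), ∑ l ∈ Finset.range (n (c₂ q j)),
      finv (antipode k (c₁ (c₂ q j) l)) (c₂ (c₂ q j) l) ⊗ₜ[k] antipode k (c₁ q j) := by
  have hr : ∀ h : H, comul (R := k) h = ∑ i ∈ Finset.range (n h), c₁ h i ⊗ₜ[k] c₂ h i := hrep
  simp [gammaInv, hr, TensorProduct.tmul_sum, map_sum]

theorem f_mul_finv (hrep : IsSweedlerRep k H n c₁ c₂) {f finv : H →ₗ[k] H →ₗ[k] A}
    (hinv : IsConvInverse k A H n c₁ c₂ f finv) :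
    WithConv.toConv (TensorProduct.lift f) * WithConv.toConv (TensorProduct.lift finv) = 1 := by
  ext x y
  refine (conv2 hrep _ _ x y).trans ?_
  simpa [Algebra.algebraMap_eq_smul_one, mul_comm] using (hinv x y).1

theorem finv_mul_f (hrep : IsSweedlerRep k H n c₁ c₂) {f finv : H →ₗ[k] H →ₗ[k] A}
    (hinv : IsConvInverse k A H n c₁ c₂ f finv) :
    WithConv.toConv (TensorProduct.lift finv) * WithConv.toConv (TensorProduct.lift f) = 1 := by
  ext x y
  refine (conv2 hrep _ _ x y).trans ?_
  simpa [Algebra.algebraMap_eq_smul_one, mul_comm] using (hinv x y).2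

theorem inc_mul {C : Type*} [AddCommGroup C] [Module k C] [Coalgebra k C]
    (P Q : WithConv (C →ₗ[k] A)) :
    WithConv.toConv ((inc k A H).toLinearMap ∘ₗ (P * Q).ofConv) =
      WithConv.toConv ((inc k A H).toLinearMap ∘ₗ P.ofConv) *
      WithConv.toConv ((inc k A H).toLinearMap ∘ₗ Q.ofConv) :=
  congrArg WithConv.toConv (LinearMap.algHom_comp_convMul_distrib (inc k A H) P Q)

theorem inc_one {C : Type*} [AddCommGroup C] [Module k C] [Coalgebra k C] :
    WithConv.toConv ((inc k A H).toLinearMap ∘ₗ (1 : WithConv (C →ₗ[k] A)).ofConv) = 1 := by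
  ext x
  exact (inc k A H).commutes _

theorem right_part (hrep : IsSweedlerRep k H n c₁ c₂)
    (σ : H →ₗ[k] A →ₗ[k] A) (f finv : H →ₗ[k] H →ₗ[k] A)
    (hweak : IsWeakAction k A H n c₁ c₂ σ)
    (hinv : IsConvInverse k A H n c₁ c₂ f finv) :
    convMul k A H σ f (gammaInv k A H finv) (gam k A H) = convOne k A H := by
  have hr : ∀ h : H, comul (R := k) h = ∑ i ∈ Finset.range (n h), c₁ h i ⊗ₜ[k] c₂ h i := hrep
  ext h
  have key : WithConv.toConv ((inc k A H).toLinearMap ∘ₗ TensorProduct.lift finv) *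
      WithConv.toConv (psi f) = WithConv.toConv (theta k A H) := by
    have e := inc_mul (H := H) (WithConv.toConv (TensorProduct.lift finv))
      (WithConv.toConv (TensorProduct.lift f))
    rw [finv_mul_f hrep hinv, inc_one] at e
    change WithConv.toConv ((inc k A H).toLinearMap ∘ₗ TensorProduct.lift finv) *
      (WithConv.toConv ((inc k A H).toLinearMap ∘ₗ TensorProduct.lift f) *
        WithConv.toConv (theta k A H)) = _
    rw [← mul_assoc]
    refine (congrArg (· * WithConv.toConv (theta k A H)) e.symm).trans (one_mul _)
  have e1 : convMul k A H σ f (gammaInv k A H finv) (gam k A H) h =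
      ∑ i ∈ Finset.range (n h), ∑ j ∈ Finset.range (n (c₁ h i)),
      ∑ l ∈ Finset.range (n (c₂ (c₁ h i) j)),
      (finv (antipode k (c₁ (c₂ (c₁ h i) j) l)) (c₂ (c₂ (c₁ h i) j) l) ⊗ₜ[k] (1 : H)) *
        psi f (antipode k (c₁ (c₁ h i) j) ⊗ₜ c₂ h i) := by
    have hcm : ∀ (a : A) (x l : H), crossedMul k A H σ f (a ⊗ₜ x) (1 ⊗ₜ l) =
        (a ⊗ₜ[k] (1 : H)) * psi f (x ⊗ₜ l) := by
      intro a x l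
      rw [crossedMul_tmul hrep]
      have := counit_left_map hrep
        (LinearMap.mulLeft k (a ⊗ₜ[k] (1 : H)) ∘ₗ psi f ∘ₗ (TensorProduct.mk k H H).flip l) x
      simp only [LinearMap.comp_apply, LinearMap.mulLeft_apply, LinearMap.flip_apply,
        TensorProduct.mk_apply] at this
      rw [← this]
      refine Finset.sum_congr rfl fun i _ => ?_
      rw [hweak.2.1, mul_smul_comm, mul_one, ← TensorProduct.smul_tmul', smul_mul_assoc]
    simp only [convMul, LinearMap.comp_apply, hr h, map_sum, TensorProduct.map_tmul,
      TensorProduct.lift.tmul, gammaInv_apply hrep, gam, TensorProduct.mk_apply,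
      LinearMap.sum_apply, hcm]
  have e2 : ∑ i ∈ Finset.range (n h),
      (WithConv.toConv ((inc k A H).toLinearMap ∘ₗ TensorProduct.lift finv) *
        WithConv.toConv (psi f)) (antipode k (c₁ h i) ⊗ₜ c₂ h i) = convOne k A H h := by
    rw [key]
    have := congrArg (TensorProduct.mk k A H 1) (antipode_mul_sum (k := k) h)
    rw [hr h] at this
    simpa [theta, convOne, oneE] using this
  rw [← e2, e1]
  simp only [conv2S hrep]
  let T1 : H ⊗[k] (H ⊗[k] (H ⊗[k] H)) →ₗ[k] A ⊗[k] H :=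
    LinearMap.mul' k (A ⊗[k] H) ∘ₗ TensorProduct.map
      ((inc k A H).toLinearMap ∘ₗ TensorProduct.lift finv ∘ₗ LinearMap.rTensor H (antipode k))
      (psi f ∘ₗ LinearMap.rTensor H (antipode k)) ∘ₗ
      (TensorProduct.assoc k H H (H ⊗[k] H)).symm.toLinearMap ∘ₗ
      LinearMap.lTensor H (TensorProduct.leftComm k H H H).toLinearMap ∘ₗ
      (TensorProduct.leftComm k H H (H ⊗[k] H)).toLinearMap
  have hT : ∀ a b c d : H, T1 (a ⊗ₜ (b ⊗ₜ (c ⊗ₜ d))) =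
      (finv (antipode k b) c ⊗ₜ[k] (1 : H)) * psi f (antipode k a ⊗ₜ d) := by
    intro a b c d
    simp [T1, inc]
  have := congrArg T1 (four hrep h)
  simp only [map_sum, hT] at this
  rw [this]
  rfl

/-- `x ⊗ (y ⊗ z) ↦ σ x (f y z)`. -/
noncomputable def mF (σ : H →ₗ[k] A →ₗ[k] A) (f : H →ₗ[k] H →ₗ[k] A) :
    H ⊗[k] (H ⊗[k] H) →ₗ[k] A :=
  TensorProduct.lift σ ∘ₗ LinearMap.lTensor H (TensorProduct.lift f)

/-- `x ⊗ (y ⊗ z) ↦ f x (y z)`. -/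
noncomputable def mU (f : H →ₗ[k] H →ₗ[k] A) : H ⊗[k] (H ⊗[k] H) →ₗ[k] A :=
  TensorProduct.lift f ∘ₗ LinearMap.lTensor H (LinearMap.mul' k H)

/-- `x ⊗ (y ⊗ z) ↦ ε(z) g (x ⊗ y)`. -/
noncomputable def mV {M : Type*} [AddCommGroup M] [Module k M] (g : H ⊗[k] H →ₗ[k] M) :
    H ⊗[k] (H ⊗[k] H) →ₗ[k] M :=
  g ∘ₗ LinearMap.lTensor H ((TensorProduct.rid k H).toLinearMap ∘ₗ
    LinearMap.lTensor H (counit (R := k)))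

/-- `x ⊗ (y ⊗ z) ↦ g (x y ⊗ z)`. -/
noncomputable def mW {M : Type*} [AddCommGroup M] [Module k M] (g : H ⊗[k] H →ₗ[k] M) :
    H ⊗[k] (H ⊗[k] H) →ₗ[k] M :=
  g ∘ₗ LinearMap.rTensor H (LinearMap.mul' k H) ∘ₗ (TensorProduct.assoc k H H H).symm.toLinearMap

theorem mF_tmul (σ : H →ₗ[k] A →ₗ[k] A) (f : H →ₗ[k] H →ₗ[k] A) (x y z : H) :
    mF σ f (x ⊗ₜ (y ⊗ₜ z)) = σ x (f y z) := by simp [mF]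

theorem mU_tmul (f : H →ₗ[k] H →ₗ[k] A) (x y z : H) :
    mU f (x ⊗ₜ (y ⊗ₜ z)) = f x (y * z) := by simp [mU]

theorem mV_tmul {M : Type*} [AddCommGroup M] [Module k M] (g : H ⊗[k] H →ₗ[k] M) (x y z : H) :
    mV g (x ⊗ₜ (y ⊗ₜ z)) = counit (R := k) z • g (x ⊗ₜ y) := by simp [mV]

theorem mW_tmul {M : Type*} [AddCommGroup M] [Module k M] (g : H ⊗[k] H →ₗ[k] M) (x y z : H) :
    mW g (x ⊗ₜ (y ⊗ₜ z)) = g ((x * y) ⊗ₜ z) := by simp [mW]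

theorem cocycle_conv (hrep : IsSweedlerRep k H n c₁ c₂)
    (σ : H →ₗ[k] A →ₗ[k] A) (f : H →ₗ[k] H →ₗ[k] A)
    (hcocycle : IsCocycle k A H n c₁ c₂ σ f) :
    WithConv.toConv (mF σ f) * WithConv.toConv (mU f) =
      WithConv.toConv (mV (TensorProduct.lift f)) *
        WithConv.toConv (mW (TensorProduct.lift f)) := by
  ext x y z
  refine (conv3 hrep _ _ x y z).trans (Eq.trans ?_ (conv3 hrep _ _ x y z).symm)
  simp only [mF_tmul, mU_tmul, mV_tmul, mW_tmul, TensorProduct.lift.tmul, smul_mul_assoc]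
  rw [hcocycle]
  refine Finset.sum_congr rfl fun i _ => Finset.sum_congr rfl fun j _ => ?_
  exact (counit_left_map hrep (LinearMap.mulLeft k (f (c₁ x i) (c₁ y j)) ∘ₗ
    f (c₂ x i * c₂ y j)) z).symm

theorem G_mul_F (hrep : IsSweedlerRep k H n c₁ c₂)
    (σ : H →ₗ[k] A →ₗ[k] A) (f finv : H →ₗ[k] H →ₗ[k] A)
    (hweak : IsWeakAction k A H n c₁ c₂ σ)
    (hinv : IsConvInverse k A H n c₁ c₂ f finv) :
    WithConv.toConv (mF σ finv) * WithConv.toConv (mF σ f) = 1 := by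
  ext x y z
  refine (conv3 hrep _ _ x y z).trans ?_
  simp only [mF_tmul]
  have e := congrArg (σ x) (hinv y z).2
  simp only [map_sum, hweak.1, map_smul, hweak.2.1] at e
  rw [Finset.sum_comm]
  refine Eq.trans (Finset.sum_congr rfl fun j _ => Finset.sum_comm) (e.trans ?_)
  change _ = algebraMap k A (counit (R := k) (x ⊗ₜ[k] (y ⊗ₜ[k] z)))
  simp [Algebra.algebraMap_eq_smul_one, smul_smul, mul_comm, mul_left_comm]

theorem W_mul_W (hrep : IsSweedlerRep k H n c₁ c₂) {f finv : H →ₗ[k] H →ₗ[k] A}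
    (hinv : IsConvInverse k A H n c₁ c₂ f finv) :
    WithConv.toConv (mW (TensorProduct.lift f)) *
      WithConv.toConv (mW (TensorProduct.lift finv)) = 1 := by
  ext x y z
  refine (conv3 hrep _ _ x y z).trans ?_
  simp only [mW_tmul]
  have e := congrArg (fun F : WithConv (H ⊗[k] H →ₗ[k] A) => F ((x * y) ⊗ₜ[k] z))
    (f_mul_finv hrep hinv)
  simp only [LinearMap.convMul_apply, TensorProduct.comul_tmul, Bialgebra.comul_mul] at e
  rw [hrep x, hrep y, hrep z] at e
  simp only [Finset.sum_mul, Finset.mul_sum, Algebra.TensorProduct.tmul_mul_tmul,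
    TensorProduct.sum_tmul, TensorProduct.tmul_sum, map_sum,
    TensorProduct.AlgebraTensorModule.tensorTensorTensorComm_tmul, TensorProduct.map_tmul,
    LinearMap.mul'_apply] at e
  have e' : (1 : WithConv (H ⊗[k] H →ₗ[k] A)) ((x * y) ⊗ₜ[k] z) =
      (1 : WithConv (H ⊗[k] (H ⊗[k] H) →ₗ[k] A)) (x ⊗ₜ[k] (y ⊗ₜ[k] z)) := by
    simp [mul_comm, mul_left_comm]
  refine Eq.trans ?_ (e.trans e')
  rw [Finset.sum_comm_cycle]
  exact Finset.sum_congr rfl fun l _ => Finset.sum_comm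

theorem G_mul_V (hrep : IsSweedlerRep k H n c₁ c₂)
    (σ : H →ₗ[k] A →ₗ[k] A) (f finv : H →ₗ[k] H →ₗ[k] A)
    (hweak : IsWeakAction k A H n c₁ c₂ σ)
    (hcocycle : IsCocycle k A H n c₁ c₂ σ f)
    (hinv : IsConvInverse k A H n c₁ c₂ f finv) :
    WithConv.toConv (mF σ finv) * WithConv.toConv (mV (TensorProduct.lift f)) =
      WithConv.toConv (mU f) * WithConv.toConv (mW (TensorProduct.lift finv)) := by
  have h1 := cocycle_conv hrep σ f hcocycle
  have h2 := G_mul_F hrep σ f finv hweak hinv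
  have h3 := W_mul_W hrep hinv
  calc _ = WithConv.toConv (mF σ finv) * WithConv.toConv (mV (TensorProduct.lift f)) *
        (WithConv.toConv (mW (TensorProduct.lift f)) *
          WithConv.toConv (mW (TensorProduct.lift finv))) := by rw [h3, mul_one]
    _ = WithConv.toConv (mF σ finv) * (WithConv.toConv (mV (TensorProduct.lift f)) *
        WithConv.toConv (mW (TensorProduct.lift f))) *
          WithConv.toConv (mW (TensorProduct.lift finv)) := by simp only [mul_assoc]
    _ = _ := by rw [← h1, ← mul_assoc, h2, one_mul]

theorem finv_one (hrep : IsSweedlerRep k H n c₁ c₂) {f finv : H →ₗ[k] H →ₗ[k] A}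
    (hnormal : IsNormal k A H f)
    (hinv : IsConvInverse k A H n c₁ c₂ f finv) (h : H) :
    finv 1 h = counit (R := k) h • (1 : A) := by
  have e := congrArg (fun F : WithConv (H ⊗[k] H →ₗ[k] A) => F ((1 : H) ⊗ₜ[k] h))
    (f_mul_finv hrep hinv)
  simp only [LinearMap.convMul_apply, TensorProduct.comul_tmul, Bialgebra.comul_one] at e
  rw [hrep h] at e
  simp only [Algebra.TensorProduct.one_def, 
    TensorProduct.sum_tmul, TensorProduct.tmul_sum, map_sum,
    TensorProduct.AlgebraTensorModule.tensorTensorTensorComm_tmul, TensorProduct.map_tmul,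
    LinearMap.mul'_apply, TensorProduct.lift.tmul, (hnormal _).2, smul_mul_assoc, one_mul] at e
  rw [counit_left_map hrep] at e
  rw [e]
  simp [Algebra.algebraMap_eq_smul_one]

/-- `x ⊗ z ↦ g(x₁, z) ⊗ x₂`. -/
noncomputable def rho (g : H →ₗ[k] H →ₗ[k] A) : H ⊗[k] H →ₗ[k] A ⊗[k] H :=
  LinearMap.rTensor H (TensorProduct.lift g) ∘ₗ (TensorProduct.assoc k H H H).symm.toLinearMap ∘ₗ
    LinearMap.lTensor H (TensorProduct.comm k H H).toLinearMap ∘ₗ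
    (TensorProduct.assoc k H H H).toLinearMap ∘ₗ LinearMap.rTensor H (comul (R := k))

theorem W_mul_theta (hrep : IsSweedlerRep k H n c₁ c₂) (g : H →ₗ[k] H →ₗ[k] A) :
    WithConv.toConv ((inc k A H).toLinearMap ∘ₗ mW (TensorProduct.lift g)) *
      WithConv.toConv (mV (theta k A H)) = WithConv.toConv (mW (rho g)) := by
  ext x y z
  refine (conv3 hrep _ _ x y z).trans ?_
  change _ = mW (rho g) (x ⊗ₜ (y ⊗ₜ z))
  rw [mW_tmul]
  have e : rho g ((x * y) ⊗ₜ[k] z) = ∑ i ∈ Finset.range (n x), ∑ j ∈ Finset.range (n y),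
      g (c₁ x i * c₁ y j) z ⊗ₜ[k] (c₂ x i * c₂ y j) := by
    simp only [rho, LinearMap.comp_apply, LinearMap.rTensor_tmul, Bialgebra.comul_mul]
    rw [hrep x, hrep y]
    simp only [Finset.sum_mul, Finset.mul_sum, Algebra.TensorProduct.tmul_mul_tmul,
      TensorProduct.sum_tmul, map_sum]
    first
    | simp; done
    | (rw [Finset.sum_comm]; simp)
  rw [e]
  refine Finset.sum_congr rfl fun i _ => Finset.sum_congr rfl fun j _ => ?_
  have := counit_right_map hrep
    ((TensorProduct.mk k A H).flip (c₂ x i * c₂ y j) ∘ₗ g (c₁ x i * c₁ y j)) z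
  simp only [LinearMap.comp_apply, LinearMap.flip_apply, TensorProduct.mk_apply] at this
  rw [← this]
  refine Finset.sum_congr rfl fun l _ => ?_
  simp [mW_tmul, mV_tmul, inc, theta]

theorem V_psi (hrep : IsSweedlerRep k H n c₁ c₂) (f : H →ₗ[k] H →ₗ[k] A) :
    WithConv.toConv (mV (psi f)) =
      WithConv.toConv ((inc k A H).toLinearMap ∘ₗ mV (TensorProduct.lift f)) *
        WithConv.toConv (mV (theta k A H)) := by
  ext x y z
  refine Eq.trans ?_ (conv3 hrep _ _ x y z).symm
  change mV (psi f) (x ⊗ₜ (y ⊗ₜ z)) = _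
  rw [mV_tmul, psi_tmul hrep, Finset.smul_sum]
  refine Finset.sum_congr rfl fun i _ => ?_
  rw [Finset.smul_sum]
  refine Finset.sum_congr rfl fun j _ => ?_
  have := counit_left_map hrep
    ((LinearMap.toSpanSingleton k _ (f (c₁ x i) (c₁ y j) ⊗ₜ[k] (c₂ x i * c₂ y j))) ∘ₗ
      counit (R := k)) z
  simp only [LinearMap.comp_apply, LinearMap.toSpanSingleton_apply] at this
  rw [← this]
  refine Finset.sum_congr rfl fun l _ => ?_
  simp [mV_tmul, inc, theta, smul_smul, TensorProduct.smul_tmul', mul_comm]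

theorem key_left (hrep : IsSweedlerRep k H n c₁ c₂)
    (σ : H →ₗ[k] A →ₗ[k] A) (f finv : H →ₗ[k] H →ₗ[k] A)
    (hweak : IsWeakAction k A H n c₁ c₂ σ)
    (hcocycle : IsCocycle k A H n c₁ c₂ σ f)
    (hinv : IsConvInverse k A H n c₁ c₂ f finv) :
    WithConv.toConv ((inc k A H).toLinearMap ∘ₗ mF σ finv) * WithConv.toConv (mV (psi f)) =
      WithConv.toConv ((inc k A H).toLinearMap ∘ₗ mU f) * WithConv.toConv (mW (rho finv)) := by
  rw [V_psi hrep, ← W_mul_theta hrep, ← mul_assoc, ← mul_assoc]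
  congr 1
  have h1 := inc_mul (H := H) (WithConv.toConv (mF σ finv))
    (WithConv.toConv (mV (TensorProduct.lift f)))
  have h2 := inc_mul (H := H) (WithConv.toConv (mU f))
    (WithConv.toConv (mW (TensorProduct.lift finv)))
  rw [G_mul_V hrep σ f finv hweak hcocycle hinv] at h1
  exact h1.symm.trans h2

theorem left_part (hrep : IsSweedlerRep k H n c₁ c₂)
    (σ : H →ₗ[k] A →ₗ[k] A) (f finv : H →ₗ[k] H →ₗ[k] A)
    (hweak : IsWeakAction k A H n c₁ c₂ σ)
    (hnormal : IsNormal k A H f)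
    (hcocycle : IsCocycle k A H n c₁ c₂ σ f)
    (hinv : IsConvInverse k A H n c₁ c₂ f finv) :
    convMul k A H σ f (gam k A H) (gammaInv k A H finv) = convOne k A H := by
  have hr : ∀ h : H, comul (R := k) h = ∑ i ∈ Finset.range (n h), c₁ h i ⊗ₜ[k] c₂ h i := hrep
  ext h
  -- the product, expanded
  have e1 : convMul k A H σ f (gam k A H) (gammaInv k A H finv) h =
      ∑ i ∈ Finset.range (n h), ∑ j ∈ Finset.range (n (c₂ h i)),
      ∑ l ∈ Finset.range (n (c₂ (c₂ h i) j)), ∑ p ∈ Finset.range (n (c₁ h i)),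
      (σ (c₁ (c₁ h i) p) (finv (antipode k (c₁ (c₂ (c₂ h i) j) l)) (c₂ (c₂ (c₂ h i) j) l))
        ⊗ₜ[k] (1 : H)) *
        psi f (c₂ (c₁ h i) p ⊗ₜ antipode k (c₁ (c₂ h i) j)) := by
    simp only [convMul, LinearMap.comp_apply, hr h, map_sum, TensorProduct.map_tmul,
      TensorProduct.lift.tmul, gammaInv_apply hrep, gam, TensorProduct.mk_apply,
      crossedMul_tmul hrep, one_mul]
  have e2 : ∀ p r : H, ∑ j ∈ Finset.range (n r), ∑ l ∈ Finset.range (n (c₂ r j)),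
      ∑ q ∈ Finset.range (n p),
      (σ (c₁ p q) (finv (antipode k (c₁ (c₂ r j) l)) (c₂ (c₂ r j) l)) ⊗ₜ[k] (1 : H)) *
        psi f (c₂ p q ⊗ₜ antipode k (c₁ r j)) =
      ∑ j ∈ Finset.range (n r),
      (WithConv.toConv ((inc k A H).toLinearMap ∘ₗ mF σ finv) * WithConv.toConv (mV (psi f)))
        (p ⊗ₜ (antipode k (c₁ r j) ⊗ₜ c₂ r j)) := by
    intro p r
    let T1 : H → H → H ⊗[k] (H ⊗[k] H) →ₗ[k] A ⊗[k] H := fun x y =>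
      LinearMap.mul' k (A ⊗[k] H) ∘ₗ TensorProduct.map
        ((inc k A H).toLinearMap ∘ₗ σ x ∘ₗ TensorProduct.lift finv ∘ₗ
          LinearMap.rTensor H (antipode k))
        (psi f ∘ₗ TensorProduct.mk k H H y ∘ₗ antipode k) ∘ₗ
        (TensorProduct.comm k H (H ⊗[k] H)).toLinearMap
    have hT : ∀ x y a b c : H, T1 x y (a ⊗ₜ (b ⊗ₜ c)) =
        (σ x (finv (antipode k b) c) ⊗ₜ[k] (1 : H)) * psi f (y ⊗ₜ antipode k a) := by
      intro x y a b c
      simp [T1, inc]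
    have h1 := coassoc_map hrep (∑ q ∈ Finset.range (n p), T1 (c₁ p q) (c₂ p q)) r
    simp only [LinearMap.sum_apply, hT] at h1
    rw [← h1]
    refine Finset.sum_congr rfl fun j _ => ?_
    rw [conv3S hrep, Finset.sum_comm]
    refine Finset.sum_congr rfl fun q _ => Finset.sum_congr rfl fun l _ => ?_
    have h2 := counit_right_map hrep
      (T1 (c₁ p q) (c₂ p q) ∘ₗ TensorProduct.mk k H (H ⊗[k] H) (c₁ (c₁ r j) l) ∘ₗ
        TensorProduct.mk k H H (c₂ (c₁ r j) l)) (c₂ r j)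
    simp only [LinearMap.comp_apply, TensorProduct.mk_apply, hT] at h2
    rw [← h2]
    refine Finset.sum_congr rfl fun s _ => ?_
    simp [mF_tmul, mV_tmul, inc]
  have e3 : ∀ p r : H, ∑ j ∈ Finset.range (n r),
      (WithConv.toConv ((inc k A H).toLinearMap ∘ₗ mU f) * WithConv.toConv (mW (rho finv)))
        (p ⊗ₜ (antipode k (c₁ r j) ⊗ₜ c₂ r j)) =
      ∑ j ∈ Finset.range (n r), rho finv ((p * antipode k (c₁ r j)) ⊗ₜ c₂ r j) := by
    intro p r
    let T1 : H → H → H ⊗[k] (H ⊗[k] H) →ₗ[k] A ⊗[k] H := fun x y =>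
      LinearMap.mul' k (A ⊗[k] H) ∘ₗ TensorProduct.map
        ((inc k A H).toLinearMap ∘ₗ f x)
        (rho finv ∘ₗ LinearMap.rTensor H (LinearMap.mulLeft k y ∘ₗ antipode k)) ∘ₗ
        (TensorProduct.leftComm k H H H).toLinearMap
    have hT : ∀ x y a b c : H, T1 x y (a ⊗ₜ (b ⊗ₜ c)) =
        (f x b ⊗ₜ[k] (1 : H)) * rho finv ((y * antipode k a) ⊗ₜ c) := by
      intro x y a b c
      simp [T1, inc]
    obtain ⟨T, hTs⟩ : ∃ T : H ⊗[k] (H ⊗[k] H) →ₗ[k] A ⊗[k] H, ∀ a b c : H, T (a ⊗ₜ (b ⊗ₜ c)) =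
        ∑ q ∈ Finset.range (n p),
          (f (c₁ p q) b ⊗ₜ[k] (1 : H)) * rho finv ((c₂ p q * antipode k a) ⊗ₜ c) := by
      refine ⟨∑ q ∈ Finset.range (n p), T1 (c₁ p q) (c₂ p q), fun a b c => ?_⟩
      simp only [LinearMap.sum_apply, hT]
    have h1 := congrArg T (collapse hrep _ (antipode_mul_sum (k := k)) r)
    simp only [map_sum, hTs, LinearMap.comp_apply, LinearMap.rTensor_tmul,
      LinearMap.mul'_apply, (hnormal _).1, ← TensorProduct.smul_tmul', smul_mul_assoc,
      ← Algebra.TensorProduct.one_def, one_mul] at h1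
    have h3 : ∀ a c : H, ∑ q ∈ Finset.range (n p),
        counit (R := k) (c₁ p q) • rho finv ((c₂ p q * antipode k a) ⊗ₜ c) =
        rho finv ((p * antipode k a) ⊗ₜ c) := by
      intro a c
      have := counit_left_map hrep (rho finv ∘ₗ (TensorProduct.mk k H H).flip c ∘ₗ
        LinearMap.mulRight k (antipode k a)) p
      simpa using this
    simp only [h3] at h1
    rw [← h1]
    refine Finset.sum_congr rfl fun j _ => ?_
    rw [conv3S hrep, ← Finset.sum_comm_cycle]
    refine Finset.sum_congr rfl fun a _ => Finset.sum_congr rfl fun l _ =>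
      Finset.sum_congr rfl fun q _ => ?_
    simp [mU_tmul, mW_tmul, inc]
  have e4 : ∑ i ∈ Finset.range (n h), ∑ j ∈ Finset.range (n (c₂ h i)),
      rho finv ((c₁ h i * antipode k (c₁ (c₂ h i) j)) ⊗ₜ c₂ (c₂ h i) j) = convOne k A H h := by
    have h1 := coassoc_map hrep (rho finv ∘ₗ
      LinearMap.rTensor H (LinearMap.mul' k H ∘ₗ LinearMap.lTensor H (antipode k)) ∘ₗ
      (TensorProduct.assoc k H H H).symm.toLinearMap) h
    simp only [LinearMap.comp_apply, LinearEquiv.coe_coe, TensorProduct.assoc_symm_tmul,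
      LinearMap.rTensor_tmul, LinearMap.lTensor_tmul, LinearMap.mul'_apply] at h1
    rw [← h1]
    have h2 : ∀ x : H, ∑ j ∈ Finset.range (n x), c₁ x j * antipode k (c₂ x j) =
        counit (R := k) x • (1 : H) := by
      intro x
      have := mul_antipode_sum (k := k) x
      rw [hr x] at this
      simpa [map_sum] using this
    have h3 : ∀ z : H, rho finv ((1 : H) ⊗ₜ z) = finv 1 z ⊗ₜ[k] (1 : H) := by
      intro z
      simp [rho, Algebra.TensorProduct.one_def]
    have h4 := counit_left_map hrep (rho finv ∘ₗ TensorProduct.mk k H H 1) h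
    simp only [LinearMap.comp_apply, TensorProduct.mk_apply] at h4
    simp only [← map_sum, ← TensorProduct.sum_tmul, h2]
    simp only [map_sum, ← TensorProduct.smul_tmul', map_smul]
    rw [h4, h3, finv_one hrep hnormal hinv]
    simp [convOne, oneE, TensorProduct.smul_tmul']
  rw [e1, ← e4]
  refine Finset.sum_congr rfl fun i _ => ?_
  rw [e2, key_left hrep σ f finv hweak hcocycle hinv, e3]

end Conv

end GammaAux

/-- If `E = A #_f H` is a crossed product and `f` is convolution invertible,
then `γ : H → E`, `γ(h) = 1 # h`, is convolution invertible in `Hom_k(H, E)` and its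
convolution inverse is `γ⁻¹(h) = f⁻¹(S(h⁽²⁾), h⁽³⁾) # S(h⁽¹⁾)`. -/
theorem gamma_convolution_invertible
    (k A H : Type*) [CommRing k] [Ring A] [Algebra k A] [Ring H] [HopfAlgebra k H]
    (σ : H →ₗ[k] A →ₗ[k] A) (f finv : H →ₗ[k] H →ₗ[k] A)
    (n : H → ℕ) (c₁ c₂ : H → ℕ → H)
    (hrep : IsSweedlerRep k H n c₁ c₂)
    (hweak : IsWeakAction k A H n c₁ c₂ σ)
    (hnormal : IsNormal k A H f)
    (hcocycle : IsCocycle k A H n c₁ c₂ σ f)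
    (htwisted : IsTwistedModule k A H n c₁ c₂ σ f)
    (hinv : IsConvInverse k A H n c₁ c₂ f finv) :
    convMul k A H σ f (gam k A H) (gammaInv k A H finv) = convOne k A H ∧
    convMul k A H σ f (gammaInv k A H finv) (gam k A H) = convOne k A H := by
  exact ⟨GammaAux.left_part hrep σ f finv hweak hnormal hcocycle hinv,
    GammaAux.right_part hrep σ f finv hweak hinv⟩
end

section
/- Assume conditions (i)–(iii) hold, f is convolution invertible with inverse f^{-1}, and f (hence f^{-1}) takes its values in k·1_A. Then in the crossed product E = A #_f H, for all h, l ∈ H one has γ^{-1}(h) γ^{-1}(l) = f^{-1}(S(l^{(2)} h^{(2)}), l^{(3)} h^{(3)}) f^{-1}(l^{(4)}, h^{(4)}) γ(S(l^{(1)} h^{(1)})). -/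
open TensorProduct

namespace TwAux
open Coalgebra WithConv HopfAlgebra

section act
variable {k Z C D N N' M : Type*} [CommRing k] [CommRing Z] [Algebra k Z]
  [AddCommGroup C] [Module k C] [Coalgebra k C]
  [AddCommGroup D] [Module k D] [Coalgebra k D]
  [AddCommGroup N] [Module k N] [Module Z N] [IsScalarTower k Z N]
  [AddCommGroup N'] [Module k N'] [Module Z N'] [IsScalarTower k Z N']
  [AddCommGroup M] [Module k M]

lemma coassoc_sum {ι : Type*} {κ Λ : ι → Type*} (T : C →ₗ[k] C →ₗ[k] C →ₗ[k] M) {c : C}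
    (r : Repr k c ι) (a : ∀ i, Repr k (r.left i) (κ i)) (b : ∀ i, Repr k (r.right i) (Λ i)) :
    ∑ i ∈ r.index, ∑ j ∈ (a i).index, T ((a i).left j) ((a i).right j) (r.right i) =
    ∑ i ∈ r.index, ∑ j ∈ (b i).index, T (r.left i) ((b i).left j) ((b i).right j) := by
  have h := congrArg (TensorProduct.lift ((TensorProduct.lift.equiv (.id k) C C M).toLinearMap ∘ₗ T))
    (sum_tmul_tmul_eq r a b)
  simpa using h

/-- `(φ ▷ w)(c) = φ(c₁) • w(c₂)` -/
noncomputable def act (φ : C →ₗ[k] Z) (w : C →ₗ[k] N) : C →ₗ[k] N :=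
  TensorProduct.lift (Algebra.lsmul k k N).toLinearMap ∘ₗ TensorProduct.map φ w ∘ₗ comul

lemma act_repr {ι : Type*} (φ : C →ₗ[k] Z) (w : C →ₗ[k] N) {c : C} (r : Repr k c ι) :
    act φ w c = ∑ i ∈ r.index, φ (r.left i) • w (r.right i) := by
  simp [act, ← r.eq]

lemma act_act (φ ψ : C →ₗ[k] Z) (w : C →ₗ[k] N) :
    act (toConv φ * toConv ψ).ofConv w = act φ (act ψ w) := by
  ext c
  rw [act_repr _ _ (ℛ k c), act_repr _ _ (ℛ k c)]
  simp only [(ℛ k (_ : C)).convMul_apply, act_repr _ _ (ℛ k (_ : C)), Finset.sum_smul,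
    Finset.smul_sum, mul_smul]
  let T : C →ₗ[k] C →ₗ[k] C →ₗ[k] N :=
    LinearMap.mk₂ k (fun x y => (Algebra.lsmul k k N (φ x)) ∘ₗ (Algebra.lsmul k k N (ψ y)) ∘ₗ w)
      (by intros; ext; simp) (by intros; ext; simp)
      (by intros; ext; simp) (by intro c x y; ext z; simp [smul_comm (φ x) c])
  exact coassoc_sum T (ℛ k c) (fun i => ℛ k _) (fun i => ℛ k _)

lemma one_act (w : C →ₗ[k] N) : act (1 : WithConv (C →ₗ[k] Z)).ofConv w = w := by
  ext c
  rw [act_repr _ _ (ℛ k c)]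
  simp only [LinearMap.convOne_apply, algebraMap_smul, ← map_smul, ← map_sum, sum_counit_smul]

lemma act_comp (φ : C →ₗ[k] Z) (w : C →ₗ[k] N) (c : D →ₗc[k] C) :
    act φ w ∘ₗ c.toLinearMap = act (φ ∘ₗ c.toLinearMap) (w ∘ₗ c.toLinearMap) := by
  simp [act, TensorProduct.map_comp, LinearMap.comp_assoc]

lemma comp_act (φ : C →ₗ[k] Z) (w : C →ₗ[k] N) (L : N →ₗ[Z] N') :
    (L.restrictScalars k) ∘ₗ act φ w = act φ (L.restrictScalars k ∘ₗ w) := by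
  ext c
  simp [act_repr _ _ (ℛ k c)]

/-- `c ⊗ d ↦ ε(d) c` -/
noncomputable def pl (k C D : Type*) [CommRing k]
  [AddCommGroup C] [Module k C] [Coalgebra k C]
  [AddCommGroup D] [Module k D] [Coalgebra k D] : C ⊗[k] D →ₗc[k] C :=
  (Coalgebra.TensorProduct.rid k k C : C ⊗[k] k →ₗc[k] C).comp
    (Coalgebra.TensorProduct.map (CoalgHom.id k C) (counitCoalgHom k D))

/-- `c ⊗ d ↦ ε(c) d` -/
noncomputable def pr (k C D : Type*) [CommRing k]
  [AddCommGroup C] [Module k C] [Coalgebra k C]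
  [AddCommGroup D] [Module k D] [Coalgebra k D] : C ⊗[k] D →ₗc[k] D :=
  (Coalgebra.TensorProduct.lid k D : k ⊗[k] D →ₗc[k] D).comp
    (Coalgebra.TensorProduct.map (counitCoalgHom k C) (CoalgHom.id k D))

@[simp] lemma pl_tmul (c : C) (d : D) : pl k C D (c ⊗ₜ d) = counit (R := k) d • c := rfl
@[simp] lemma pr_tmul (c : C) (d : D) : pr k C D (c ⊗ₜ d) = counit (R := k) c • d := rfl

/-- comul representation of a tensor. -/
noncomputable def tRepr {ι κ : Type*} {c : C} {d : D} (r : Repr k c ι) (s : Repr k d κ) :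
    Repr k (c ⊗ₜ[k] d) (ι × κ) where
  index := r.index ×ˢ s.index
  left i := r.left i.1 ⊗ₜ s.left i.2
  right i := r.right i.1 ⊗ₜ s.right i.2
  eq := by
    simp [← r.eq, ← s.eq, TensorProduct.sum_tmul r.index, TensorProduct.tmul_sum,
      ← Finset.sum_product']

lemma act_tmul {ι κ : Type*} (φ : C ⊗[k] D →ₗ[k] Z) (w : C ⊗[k] D →ₗ[k] N) {c : C} {d : D}
    (r : Repr k c ι) (s : Repr k d κ) :
    act φ w (c ⊗ₜ d) = ∑ i ∈ r.index, ∑ j ∈ s.index,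
      φ (r.left i ⊗ₜ s.left j) • w (r.right i ⊗ₜ s.right j) := by
  rw [act_repr _ _ (tRepr r s)]
  simp [tRepr, Finset.sum_product]

lemma act_pl (φ : C →ₗ[k] Z) (w : C ⊗[k] D →ₗ[k] N) (c : C) (d : D) :
    act (φ ∘ₗ (pl k C D).toLinearMap) w (c ⊗ₜ d) =
      act φ (w ∘ₗ (TensorProduct.mk k C D).flip d) c := by
  rw [act_tmul _ _ (ℛ k c) (ℛ k d), act_repr _ _ (ℛ k c)]
  refine Finset.sum_congr rfl fun i _ => ?_
  have e : w ((ℛ k c).right i ⊗ₜ d) = ∑ j ∈ (ℛ k d).index,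
      counit (R := k) ((ℛ k d).left j) • w ((ℛ k c).right i ⊗ₜ (ℛ k d).right j) := by
    simp only [← map_smul, ← map_sum, ← TensorProduct.tmul_smul, ← TensorProduct.tmul_sum,
      sum_counit_smul]
  simp only [LinearMap.comp_apply, LinearMap.flip_apply, TensorProduct.mk_apply, e,
    Finset.smul_sum]
  refine Finset.sum_congr rfl fun j _ => ?_
  rw [smul_comm]
  simp

lemma act_pr (φ : D →ₗ[k] Z) (w : C ⊗[k] D →ₗ[k] N) (c : C) (d : D) :
    act (φ ∘ₗ (pr k C D).toLinearMap) w (c ⊗ₜ d) =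
      act φ (w ∘ₗ TensorProduct.mk k C D c) d := by
  rw [act_tmul _ _ (ℛ k c) (ℛ k d), act_repr _ _ (ℛ k d), Finset.sum_comm]
  refine Finset.sum_congr rfl fun i _ => ?_
  have e : w (c ⊗ₜ (ℛ k d).right i) = ∑ j ∈ (ℛ k c).index,
      counit (R := k) ((ℛ k c).left j) • w ((ℛ k c).right j ⊗ₜ (ℛ k d).right i) := by
    simp only [← map_smul, ← map_sum, TensorProduct.smul_tmul', ← TensorProduct.sum_tmul,
      sum_counit_smul]
  simp only [LinearMap.comp_apply, TensorProduct.mk_apply, e, Finset.smul_sum]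
  refine Finset.sum_congr rfl fun j _ => ?_
  rw [smul_comm]
  simp

end act
end TwAux

namespace TwAux
open Coalgebra WithConv HopfAlgebra


lemma act_pr_comp {k Z B C D N : Type*} [CommRing k] [CommRing Z] [Algebra k Z]
    [AddCommGroup B] [Module k B] [Coalgebra k B]
    [AddCommGroup C] [Module k C] [Coalgebra k C]
    [AddCommGroup D] [Module k D] [Coalgebra k D]
    [AddCommGroup N] [Module k N] [Module Z N] [IsScalarTower k Z N]
    (φ : D →ₗ[k] Z) (w : C ⊗[k] D →ₗ[k] N) (c : B →ₗc[k] C ⊗[k] D) (b : B) (x : C) (y : D)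
    (hb : c b = x ⊗ₜ y) :
    act ((φ ∘ₗ (pr k C D).toLinearMap) ∘ₗ c.toLinearMap) (w ∘ₗ c.toLinearMap) b =
      act φ (w ∘ₗ TensorProduct.mk k C D x) y := by
  rw [← act_comp, ← act_pr, ← hb]
  rfl

/-- `x ⊗ y ⊗ z ↦ xy ⊗ z` -/
noncomputable def m12 (k H : Type*) [CommRing k] [Ring H] [HopfAlgebra k H] :
    (H ⊗[k] H) ⊗[k] H →ₗc[k] H ⊗[k] H :=
  Coalgebra.TensorProduct.map (Bialgebra.mulCoalgHom k H) (CoalgHom.id k H)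

/-- `x ⊗ y ⊗ z ↦ x ⊗ yz` -/
noncomputable def m23 (k H : Type*) [CommRing k] [Ring H] [HopfAlgebra k H] :
    H ⊗[k] (H ⊗[k] H) →ₗc[k] H ⊗[k] H :=
  Coalgebra.TensorProduct.map (CoalgHom.id k H) (Bialgebra.mulCoalgHom k H)

/-- associator -/
noncomputable def asc (k H : Type*) [CommRing k] [Ring H] [HopfAlgebra k H] :
    (H ⊗[k] H) ⊗[k] H →ₗc[k] H ⊗[k] (H ⊗[k] H) :=
  (Coalgebra.TensorProduct.assoc k k H H H).toCoalgHom

section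
variable {k H : Type*} [CommRing k] [Ring H] [HopfAlgebra k H] (x y z : H)
@[simp] lemma m12_tmul : m12 k H ((x ⊗ₜ y) ⊗ₜ z) = (x * y) ⊗ₜ z := rfl
@[simp] lemma m23_tmul : m23 k H (x ⊗ₜ (y ⊗ₜ z)) = x ⊗ₜ (y * z) := rfl
@[simp] lemma asc_tmul : asc k H ((x ⊗ₜ y) ⊗ₜ z) = x ⊗ₜ (y ⊗ₜ z) := rfl
end

/-- A normalised invertible 2-cocycle with values in a commutative algebra. -/
structure CocData (k Z H : Type*) [CommRing k] [CommRing Z] [Algebra k Z] [Ring H]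
    [HopfAlgebra k H] where
  f : H ⊗[k] H →ₗ[k] Z
  g : H ⊗[k] H →ₗ[k] Z
  fg : toConv f * toConv g = 1
  gf : toConv g * toConv f = 1
  f_one : ∀ h, f (h ⊗ₜ 1) = algebraMap k Z (counit h)
  one_f : ∀ h, f (1 ⊗ₜ h) = algebraMap k Z (counit h)
  coc : toConv (f ∘ₗ (pl k (H ⊗[k] H) H).toLinearMap) * toConv (f ∘ₗ (m12 k H).toLinearMap) =
    toConv ((f ∘ₗ (pr k H (H ⊗[k] H)).toLinearMap) ∘ₗ (asc k H).toLinearMap) *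
      toConv ((f ∘ₗ (m23 k H).toLinearMap) ∘ₗ (asc k H).toLinearMap)

variable {k Z H : Type*} [CommRing k] [CommRing Z] [Algebra k Z] [Ring H] [HopfAlgebra k H]

/-- The twisted algebra `Z #_f H`. -/
def TwE (_ : CocData k Z H) : Type _ := Z ⊗[k] H

variable (d : CocData k Z H)

noncomputable instance : AddCommGroup (TwE d) := inferInstanceAs (AddCommGroup (Z ⊗[k] H))
noncomputable instance : Module k (TwE d) := inferInstanceAs (Module k (Z ⊗[k] H))
noncomputable instance : Module Z (TwE d) := inferInstanceAs (Module Z (Z ⊗[k] H))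
instance : IsScalarTower k Z (TwE d) := inferInstanceAs (IsScalarTower k Z (Z ⊗[k] H))

/-- `h ↦ 1 # h` -/
noncomputable def ga : H →ₗ[k] TwE d := TensorProduct.mk k Z H 1

/-- Z-linear extension -/
noncomputable def extT (k Z H : Type*) [CommRing k] [CommRing Z] [Algebra k Z] [Ring H]
    [HopfAlgebra k H] (N : Type*) [AddCommGroup N] [Module k N] [Module Z N]
    [IsScalarTower k Z N] : (H →ₗ[k] N) →ₗ[k] (Z ⊗[k] H →ₗ[Z] N) :=
  { toFun := fun w => LinearMap.liftBaseChange Z w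
    map_add' := fun v w => (LinearMap.liftBaseChangeEquiv (M := H) Z).map_add v w
    map_smul' := fun c w => by
      apply LinearMap.ext
      intro x
      induction x using TensorProduct.induction_on with
      | zero => simp only [map_zero]
      | tmul a h =>
        rw [LinearMap.liftBaseChange_tmul, LinearMap.smul_apply, RingHom.id_apply,
          LinearMap.smul_apply, LinearMap.liftBaseChange_tmul, smul_comm]
      | add x y hx hy => simp only [map_add, hx, hy] }

/-- Z-linear extension -/
noncomputable def zext {N : Type*} [AddCommGroup N] [Module k N] [Module Z N] [IsScalarTower k Z N] :
    (H →ₗ[k] N) →ₗ[k] (TwE d →ₗ[Z] N) := extT k Z H N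

@[simp] lemma zext_ga {N : Type*} [AddCommGroup N] [Module k N] [Module Z N] [IsScalarTower k Z N]
    (w : H →ₗ[k] N) (h : H) : zext d w (ga d h) = w h := by
  change LinearMap.liftBaseChange Z w ((1 : Z) ⊗ₜ[k] h) = w h
  simp

lemma tw_induction {P : TwE d → Prop} (hs : ∀ (a : Z) h, P (a • ga d h))
    (hadd : ∀ x y, P x → P y → P (x + y)) (x : TwE d) : P x := by
  induction x using TensorProduct.induction_on with
  | zero =>
    have := hs 0 0
    rw [zero_smul] at this
    exact this
  | tmul a h =>
    have := hs a h
    have e : a • ga d h = (show TwE d from a ⊗ₜ[k] h) := by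
      change a • ((1 : Z) ⊗ₜ[k] h) = a ⊗ₜ[k] h
      simp [TensorProduct.smul_tmul']
    rw [e] at this
    exact this
  | add x y hx hy => exact hadd x y hx hy

lemma hom_ext {N : Type*} [AddCommGroup N] [Module Z N] {F G : TwE d →ₗ[Z] N}
    (h : ∀ x, F (ga d x) = G (ga d x)) : F = G := by
  ext x
  induction x using tw_induction with
  | hs a y => simp [h]
  | hadd x y hx hy => simp [hx, hy]

/-- product on generators -/
noncomputable def mu : H ⊗[k] H →ₗ[k] TwE d := act d.f (ga d ∘ₗ LinearMap.mul' k H)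

/-- product -/
noncomputable def mulE : TwE d →ₗ[Z] TwE d →ₗ[Z] TwE d :=
  zext d (zext d ∘ₗ TensorProduct.curry (mu d))

@[simp] lemma mulE_ga (x y : H) : mulE d (ga d x) (ga d y) = mu d (x ⊗ₜ y) := by
  simp [mulE]

lemma mu_assoc (x y z : H) :
    mulE d (mu d (x ⊗ₜ y)) (ga d z) = mulE d (ga d x) (mu d (y ⊗ₜ z)) := by
  have h1 : mulE d (mu d (x ⊗ₜ y)) (ga d z) = act (d.f ∘ₗ (pl k (H ⊗[k] H) H).toLinearMap)
      (mu d ∘ₗ (m12 k H).toLinearMap) ((x ⊗ₜ y) ⊗ₜ z) := by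
    rw [act_pl]
    have := LinearMap.congr_fun (comp_act d.f (ga d ∘ₗ LinearMap.mul' k H)
      ((mulE d).flip (ga d z))) (x ⊗ₜ y)
    refine this.trans ?_
    congr 2
    ext a b
    simp
  have h2 : mulE d (ga d x) (mu d (y ⊗ₜ z)) =
      act ((d.f ∘ₗ (pr k H (H ⊗[k] H)).toLinearMap) ∘ₗ (asc k H).toLinearMap)
      ((mu d ∘ₗ (m23 k H).toLinearMap) ∘ₗ (asc k H).toLinearMap) ((x ⊗ₜ y) ⊗ₜ z) := by
    rw [act_pr_comp d.f _ (asc k H) _ x (y ⊗ₜ z) (asc_tmul x y z)]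
    have := LinearMap.congr_fun (comp_act d.f (ga d ∘ₗ LinearMap.mul' k H)
      (mulE d (ga d x))) (y ⊗ₜ z)
    refine this.trans ?_
    congr 2
    ext a b
    simp
  rw [h1, h2, mu, act_comp, act_comp, act_comp, ← act_act, ← act_act, d.coc]
  congr 2
  ext a b c
  simp [mul_assoc]

lemma mulE_assoc (x y z : TwE d) : mulE d (mulE d x y) z = mulE d x (mulE d y z) := by
  induction x using tw_induction with
  | hadd x y hx hy => simp [hx, hy]
  | hs a x =>
  induction y using tw_induction with
  | hadd x y hx hy => simp only [map_add, LinearMap.add_apply, hx, hy]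
  | hs b y =>
  induction z using tw_induction with
  | hadd x y hx hy => simp only [map_add, hx, hy]
  | hs c z =>
  simp only [map_smul, LinearMap.smul_apply, mulE_ga, mu_assoc]

lemma mu_one (x : H) : mu d (x ⊗ₜ 1) = ga d x := by
  have : act d.f (ga d ∘ₗ LinearMap.mul' k H) (x ⊗ₜ 1) = _ :=
    act_tmul _ _ (ℛ k x) ⟨{()}, fun _ => 1, fun _ => 1, by simp [Algebra.TensorProduct.one_def]⟩
  rw [mu, this]
  simp only [Finset.sum_singleton, d.f_one, algebraMap_smul, LinearMap.comp_apply,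
    LinearMap.mul'_apply, mul_one, ← map_smul, ← map_sum, sum_counit_smul]

lemma one_mu (x : H) : mu d (1 ⊗ₜ x) = ga d x := by
  have : act d.f (ga d ∘ₗ LinearMap.mul' k H) (1 ⊗ₜ x) = _ :=
    act_tmul _ _ ⟨{()}, fun _ => 1, fun _ => 1, by simp [Algebra.TensorProduct.one_def]⟩ (ℛ k x)
  rw [mu, this]
  simp only [Finset.sum_singleton, d.one_f, algebraMap_smul, LinearMap.comp_apply,
    LinearMap.mul'_apply, one_mul, ← map_smul, ← map_sum, sum_counit_smul]

noncomputable instance : Ring (TwE d) :=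
  { (inferInstance : AddCommGroup (TwE d)) with
    mul := fun x y => mulE d x y
    one := ga d 1
    mul_assoc := mulE_assoc d
    one_mul := fun x => by
      change mulE d (ga d 1) x = x
      have : mulE d (ga d 1) = LinearMap.id := hom_ext d (by simp [one_mu])
      rw [this]; rfl
    mul_one := fun x => by
      change mulE d x (ga d 1) = x
      have : (mulE d).flip (ga d 1) = LinearMap.id := hom_ext d (by simp [mu_one])
      exact LinearMap.congr_fun this x
    left_distrib := fun x y z => (mulE d x).map_add y z
    right_distrib := fun x y z => by
      change mulE d (x + y) z = mulE d x z + mulE d y z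
      simp
    zero_mul := fun x => by
      change mulE d 0 x = 0
      simp
    mul_zero := fun x => (mulE d x).map_zero }

lemma mul_def (x y : TwE d) : x * y = mulE d x y := rfl
lemma one_def : (1 : TwE d) = ga d 1 := rfl

noncomputable instance : Algebra Z (TwE d) :=
  Algebra.ofModule (fun r x y => by simp [mul_def]) (fun r x y => by simp [mul_def])

noncomputable instance : Algebra k (TwE d) :=
  Algebra.ofModule (fun r x y => by
      rw [← algebraMap_smul Z r x, smul_mul_assoc, algebraMap_smul])
    (fun r x y => by rw [← algebraMap_smul Z r y, mul_smul_comm, algebraMap_smul])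


end TwAux

namespace TwAux
open Coalgebra WithConv HopfAlgebra
variable {k Z H : Type*} [CommRing k] [CommRing Z] [Algebra k Z] [Ring H] [HopfAlgebra k H]
variable (d : CocData k Z H)

lemma sum_counit_smul_r {k C ι : Type*} [CommRing k] [AddCommGroup C] [Module k C]
    [Coalgebra k C] {c : C} (r : Repr k c ι) :
    ∑ i ∈ r.index, counit (R := k) (r.right i) • r.left i = c := by
  have := congrArg (TensorProduct.rid k C) (sum_tmul_counit_eq r)
  simpa only [map_sum, TensorProduct.rid_tmul, one_smul] using this

lemma ga_mul_ga (x y : H) : ga d x * ga d y = mu d (x ⊗ₜ y) := mulE_ga d x y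

/-- `Q(a ⊗ b) = g(a₁, b) • ga(a₂)` -/
noncomputable def Q : H ⊗[k] H →ₗ[k] TwE d := act d.g (ga d ∘ₗ (pl k H H).toLinearMap)

lemma Q_tmul {ι : Type*} {a : H} (r : Repr k a ι) (b : H) :
    Q d (a ⊗ₜ b) = ∑ i ∈ r.index, d.g (r.left i ⊗ₜ b) • ga d (r.right i) := by
  rw [Q, act_tmul _ _ r (ℛ k b)]
  refine Finset.sum_congr rfl fun i _ => ?_
  have e : d.g (r.left i ⊗ₜ b) = ∑ j ∈ (ℛ k b).index,
      counit (R := k) ((ℛ k b).right j) • d.g (r.left i ⊗ₜ (ℛ k b).left j) := by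
    simp only [← map_smul, ← map_sum, ← TensorProduct.tmul_smul, ← TensorProduct.tmul_sum,
      sum_counit_smul_r]
  rw [e, Finset.sum_smul]
  refine Finset.sum_congr rfl fun j _ => ?_
  rw [smul_assoc, smul_comm]
  simp

lemma Q_mul_ga {ι : Type*} (a : H) {b : H} (r : Repr k b ι) :
    ∑ i ∈ r.index, Q d (a ⊗ₜ r.left i) * ga d (r.right i) = ga d (a * b) := by
  have h : act d.g (mu d) (a ⊗ₜ b) = ga d (a * b) := by
    rw [mu, ← act_act, d.gf, one_act]
    rfl
  rw [← h, act_tmul _ _ (ℛ k a) r, Finset.sum_comm]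
  refine Finset.sum_congr rfl fun i _ => ?_
  rw [Q_tmul d (ℛ k a), Finset.sum_mul]
  refine Finset.sum_congr rfl fun j _ => ?_
  rw [smul_mul_assoc, ga_mul_ga]

/-- convolution inverse of `ga` -/
noncomputable def ginv : H →ₗ[k] TwE d :=
  Q d ∘ₗ LinearMap.rTensor H (antipode k) ∘ₗ comul

lemma ginv_repr {ι : Type*} {h : H} (r : Repr k h ι) :
    ginv d h = ∑ i ∈ r.index, Q d (antipode k (r.left i) ⊗ₜ r.right i) := by
  simp [ginv, ← r.eq]

lemma ginv_mul_ga : toConv (ginv d) * toConv (ga d) = 1 := by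
  ext h
  rw [(ℛ k h).convMul_apply]
  simp only [ginv_repr d (ℛ k (_ : H)), Finset.sum_mul]
  let T : H →ₗ[k] H →ₗ[k] H →ₗ[k] TwE d :=
    LinearMap.mk₂ k (fun x y => LinearMap.mulLeft k (Q d (antipode k x ⊗ₜ y)) ∘ₗ ga d)
      (by intros; ext; simp [TensorProduct.add_tmul, add_mul])
      (by intros; ext; simp [← TensorProduct.smul_tmul'])
      (by intros; ext; simp [TensorProduct.tmul_add, add_mul])
      (by intros; ext; simp)
  refine (coassoc_sum T (ℛ k h) (fun i => ℛ k _) (fun i => ℛ k _)).trans ?_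
  simp only [T, LinearMap.mk₂_apply, LinearMap.comp_apply, LinearMap.mulLeft_apply, Q_mul_ga,
    ← map_sum, sum_antipode_mul_eq_algebraMap_counit, LinearMap.convOne_apply]
  rw [Algebra.algebraMap_eq_smul_one, Algebra.algebraMap_eq_smul_one, map_smul, one_def]

/-- `b, h ↦ Q(b S(h₁) ⊗ h₂)` -/
noncomputable def xi : H →ₗ[k] H →ₗ[k] TwE d :=
  TensorProduct.curry (Q d ∘ₗ LinearMap.rTensor H (LinearMap.mul' k H) ∘ₗ
    (TensorProduct.assoc k H H H).symm.toLinearMap ∘ₗ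
    LinearMap.lTensor H (LinearMap.rTensor H (antipode k) ∘ₗ comul))

lemma xi_repr {ι : Type*} (b : H) {h : H} (r : Repr k h ι) :
    xi d b h = ∑ i ∈ r.index, Q d ((b * antipode k (r.left i)) ⊗ₜ r.right i) := by
  simp [xi, ← r.eq, TensorProduct.tmul_sum]

lemma xi_mul {ι : Type*} (a : H) {h : H} (r : Repr k h ι) :
    ∑ i ∈ r.index, xi d (a * r.left i) (r.right i) = Q d (a ⊗ₜ h) := by
  let T : H →ₗ[k] H →ₗ[k] H →ₗ[k] TwE d :=
    LinearMap.mk₂ k (fun x y => Q d ∘ₗ TensorProduct.mk k H H (a * x * antipode k y))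
      (by intros; ext; simp [TensorProduct.add_tmul, add_mul, mul_add])
      (by intros; ext; simp [← TensorProduct.smul_tmul'])
      (by intros; ext; simp [TensorProduct.add_tmul, mul_add])
      (by intros; ext; simp [← TensorProduct.smul_tmul'])
  simp only [xi_repr d _ (ℛ k (_ : H))]
  refine (coassoc_sum T r (fun i => ℛ k _) (fun i => ℛ k _)).symm.trans ?_
  simp only [T, LinearMap.mk₂_apply, LinearMap.comp_apply, TensorProduct.mk_apply, mul_assoc,
    ← map_sum, ← TensorProduct.sum_tmul, ← Finset.mul_sum, sum_mul_antipode_eq_algebraMap_counit]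
  simp only [Algebra.algebraMap_eq_smul_one, mul_smul_comm, mul_one, TensorProduct.smul_tmul,
    ← TensorProduct.tmul_sum, sum_counit_smul]

/-- Z-linear extension of `xi` -/
noncomputable def Xi : TwE d →ₗ[Z] H →ₗ[k] TwE d := zext d (xi d)

lemma Xi_mul {ι : Type*} (x : TwE d) {h : H} (r : Repr k h ι) :
    ∑ i ∈ r.index, Xi d (x * ga d (r.left i)) (r.right i) = counit (R := k) h • x := by
  induction x using tw_induction with
  | hadd x y hx hy => simp only [add_mul, map_add, LinearMap.add_apply, Finset.sum_add_distrib,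
      hx, hy, smul_add]
  | hs c a =>
    simp only [smul_mul_assoc, map_smul, LinearMap.smul_apply, ← Finset.smul_sum]
    rw [smul_comm]
    congr 1
    have h1 : act d.f (Q d) (a ⊗ₜ h) = counit (R := k) h • ga d a := by
      rw [Q, ← act_act, d.fg, one_act]
      simp
    rw [← h1, act_tmul _ _ (ℛ k a) r]
    simp only [ga_mul_ga, mu, act_tmul _ _ (ℛ k a) (ℛ k (_ : H)), map_sum, map_smul,
      LinearMap.comp_apply, LinearMap.mul'_apply, LinearMap.sum_apply, LinearMap.smul_apply,
      Xi, zext_ga]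
    rw [Finset.sum_comm]
    refine Finset.sum_congr rfl fun i _ => ?_
    let T : H →ₗ[k] H →ₗ[k] H →ₗ[k] TwE d :=
      LinearMap.mk₂ k (fun x y => d.f ((ℛ k a).left i ⊗ₜ x) • xi d ((ℛ k a).right i * y))
        (by intros; ext; simp [TensorProduct.tmul_add, add_smul])
        (by intros; ext; simp)
        (by intros; ext; simp [mul_add])
        (by intro c m n; ext; simp only [mul_smul_comm, map_smul]; rw [smul_comm])
    refine (coassoc_sum T r (fun i => ℛ k _) (fun i => ℛ k _)).trans ?_
    simp only [T, LinearMap.mk₂_apply, LinearMap.smul_apply, ← Finset.smul_sum, xi_mul]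

lemma eq_Xi {ι : Type*} (u : H →ₗ[k] TwE d) {h : H} (r : Repr k h ι) :
    u h = ∑ i ∈ r.index, Xi d ((toConv u * toConv (ga d)) (r.left i)) (r.right i) := by
  let T : H →ₗ[k] H →ₗ[k] H →ₗ[k] TwE d :=
    LinearMap.mk₂ k (fun x y => Xi d (u x * ga d y))
      (by intros; ext; simp [add_mul])
      (by intro c x y; rw [map_smul, ← algebraMap_smul Z c, smul_mul_assoc, map_smul, algebraMap_smul])
      (by intros; ext; simp [mul_add])
      (by intro c x y; rw [map_smul, ← algebraMap_smul Z c, mul_smul_comm, map_smul, algebraMap_smul])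
  simp only [(ℛ k (_ : H)).convMul_apply, map_sum, LinearMap.sum_apply]
  refine Eq.trans ?_ (coassoc_sum T r (fun i => ℛ k _) (fun i => ℛ k _)).symm
  simp only [T, LinearMap.mk₂_apply, Xi_mul, ← map_smul, ← map_sum, sum_counit_smul_r]

lemma ga_mul_ginv : toConv (ga d) * toConv (ginv d) = 1 := by
  have h : (toConv (ga d) * toConv (ginv d)) * toConv (ga d) = 1 * toConv (ga d) := by
    rw [mul_assoc, ginv_mul_ga, mul_one, one_mul]
  have e : ∀ u v : WithConv (H →ₗ[k] TwE d), u * toConv (ga d) = v * toConv (ga d) → u = v := by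
    intro u v huv
    ext x
    refine (eq_Xi d u.ofConv (ℛ k x)).trans (Eq.trans ?_ (eq_Xi d v.ofConv (ℛ k x)).symm)
    simp only [toConv_ofConv, huv]
  exact e _ _ h

end TwAux

namespace TwAux
open Coalgebra WithConv HopfAlgebra
section
variable {k Z H : Type*} [CommRing k] [CommRing Z] [Algebra k Z] [Ring H] [HopfAlgebra k H]

lemma anti_left_inv : toConv (TensorProduct.map (antipode k) (antipode k) ∘ₗ
      (TensorProduct.comm k H H).toLinearMap ∘ₗ comul) *
      toConv (comul (R := k) (A := H)) = 1 := by
  ext h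
  rw [(ℛ k h).convMul_apply]
  have e1 : ∀ x : H, (TensorProduct.map (antipode k) (antipode k) ∘ₗ
      (TensorProduct.comm k H H).toLinearMap ∘ₗ comul) x =
      ∑ j ∈ (ℛ k x).index, antipode k ((ℛ k x).right j) ⊗ₜ[k] antipode k ((ℛ k x).left j) := by
    intro x
    simp only [LinearMap.comp_apply]
    rw [← (ℛ k x).eq]
    simp
  simp only [e1, Finset.sum_mul]
  let T : H →ₗ[k] H →ₗ[k] H →ₗ[k] H ⊗[k] H :=
    LinearMap.mk₂ k (fun x y => LinearMap.mulLeft k (antipode k y ⊗ₜ[k] antipode k x) ∘ₗ comul)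
      (by intros; apply LinearMap.ext; intro; simp [TensorProduct.tmul_add, add_mul])
      (by intros; apply LinearMap.ext; intro; simp)
      (by intros; apply LinearMap.ext; intro; simp [TensorProduct.add_tmul, add_mul])
      (by intros; apply LinearMap.ext; intro; simp [← TensorProduct.smul_tmul'])
  refine (coassoc_sum T (ℛ k h) (fun i => ℛ k _) (fun i => ℛ k _)).trans ?_
  have e2 : ∀ x y : H, ∑ j ∈ (ℛ k y).index, T x ((ℛ k y).left j) ((ℛ k y).right j) =
      1 ⊗ₜ (antipode k x * y) := by
    intro x y
    let T2 : H →ₗ[k] H →ₗ[k] H →ₗ[k] H ⊗[k] H :=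
      LinearMap.mk₂ k (fun a b => TensorProduct.mk k H H (antipode k a * b) ∘ₗ
          LinearMap.mulLeft k (antipode k x))
        (by intros; apply LinearMap.ext; intro; simp [TensorProduct.add_tmul, add_mul])
        (by intros; apply LinearMap.ext; intro; simp [← TensorProduct.smul_tmul'])
        (by intros; apply LinearMap.ext; intro; simp [TensorProduct.add_tmul, mul_add])
        (by intros; apply LinearMap.ext; intro; simp [← TensorProduct.smul_tmul'])
    have e3 : ∀ a b : H, T x a b = ∑ j ∈ (ℛ k b).index,
        T2 a ((ℛ k b).left j) ((ℛ k b).right j) := by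
      intro a b
      simp only [T, T2, LinearMap.mk₂_apply, LinearMap.comp_apply]
      rw [← (ℛ k b).eq]
      simp [Finset.mul_sum]
    simp only [e3]
    refine (coassoc_sum T2 (ℛ k y) (fun i => ℛ k _) (fun i => ℛ k _)).symm.trans ?_
    simp only [T2, LinearMap.mk₂_apply, LinearMap.comp_apply, TensorProduct.mk_apply,
      ← TensorProduct.sum_tmul, sum_antipode_mul_eq_algebraMap_counit,
      Algebra.algebraMap_eq_smul_one, LinearMap.mulLeft_apply, TensorProduct.smul_tmul,
      ← TensorProduct.tmul_sum, ← mul_smul_comm, ← Finset.mul_sum, sum_counit_smul]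
  simp only [e2, ← TensorProduct.tmul_sum, sum_antipode_mul_eq_algebraMap_counit,
    LinearMap.convOne_apply, Algebra.algebraMap_eq_smul_one, TensorProduct.tmul_smul,
    Algebra.TensorProduct.one_def]

lemma comul_antipode' : comul (R := k) (A := H) ∘ₗ antipode k =
    TensorProduct.map (antipode k) (antipode k) ∘ₗ
      (TensorProduct.comm k H H).toLinearMap ∘ₗ comul :=
  (congrArg WithConv.ofConv
    (left_inv_eq_right_inv anti_left_inv LinearMap.comul_right_inv)).symm

/-- representation of the antipode -/
noncomputable def sRepr {ι : Type*} {h : H} (r : Repr k h ι) : Repr k (antipode k h) ι where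
  index := r.index
  left i := antipode k (r.right i)
  right i := antipode k (r.left i)
  eq := by
    have := LinearMap.congr_fun (comul_antipode' (k := k) (H := H)) h
    simp only [LinearMap.comp_apply] at this
    rw [this, ← r.eq]
    simp

variable (d : CocData k Z H)

lemma ginv_formula {ι : Type*} {κ : ι → Type*} {h : H} (r : Repr k h ι)
    (b : ∀ i, Repr k (r.right i) (κ i)) :
    ginv d h = ∑ i ∈ r.index, ∑ j ∈ (b i).index,
      d.g (antipode k ((b i).left j) ⊗ₜ (b i).right j) • ga d (antipode k (r.left i)) := by
  let T : H →ₗ[k] H →ₗ[k] H →ₗ[k] TwE d :=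
    LinearMap.mk₂ k (fun x y => LinearMap.flip (Algebra.lsmul k k (TwE d)).toLinearMap
        (ga d (antipode k x)) ∘ₗ d.g ∘ₗ TensorProduct.mk k H H (antipode k y))
      (by intros; ext; simp)
      (by intro c x y; ext; simp only [map_smul, LinearMap.comp_apply, LinearMap.smul_apply])
      (by intros; ext; simp [add_smul])
      (by intros; ext; simp)
  rw [ginv_repr d r]
  simp only [Q_tmul d (sRepr (ℛ k (_ : H)))]
  exact coassoc_sum T r (fun i => ℛ k _) b

section main
variable {C D E : Type*} [AddCommGroup C] [Module k C] [Coalgebra k C]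
  [AddCommGroup D] [Module k D] [Coalgebra k D] [Ring E] [Algebra k E]

lemma conv_comp {u v w : WithConv (C →ₗ[k] E)} (h : u * v = w) (c : D →ₗc[k] C) :
    toConv (u.ofConv ∘ₗ c.toLinearMap) * toConv (v.ofConv ∘ₗ c.toLinearMap) =
      toConv (w.ofConv ∘ₗ c.toLinearMap) := by
  rw [← h, LinearMap.convMul_comp_coalgHom_distrib]

lemma conv_comp_one {u v : C →ₗ[k] E} (h : toConv u * toConv v = 1) (c : D →ₗc[k] C) :
    toConv (u ∘ₗ c.toLinearMap) * toConv (v ∘ₗ c.toLinearMap) = 1 := by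
  refine (conv_comp h c).trans ?_
  ext x
  simp

lemma conv_pl_pr (u : C →ₗ[k] E) (v : D →ₗ[k] E) :
    toConv (u ∘ₗ (pl k C D).toLinearMap) * toConv (v ∘ₗ (pr k C D).toLinearMap) =
      toConv (LinearMap.mul' k E ∘ₗ TensorProduct.map u v) := by
  apply WithConv.ext
  apply TensorProduct.ext'
  intro x y
  rw [(tRepr (ℛ k x) (ℛ k y)).convMul_apply]
  have ex : u x = ∑ i ∈ (ℛ k x).index, counit (R := k) ((ℛ k x).right i) • u ((ℛ k x).left i) := by
    simp only [← map_smul, ← map_sum, sum_counit_smul_r]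
  have ey : v y = ∑ i ∈ (ℛ k y).index, counit (R := k) ((ℛ k y).left i) • v ((ℛ k y).right i) := by
    simp only [← map_smul, ← map_sum, sum_counit_smul]
  simp only [tRepr, Finset.sum_product, LinearMap.comp_apply, TensorProduct.map_tmul,
    LinearMap.mul'_apply, ex, ey, Finset.sum_mul_sum]
  refine Finset.sum_congr rfl fun i _ => Finset.sum_congr rfl fun j _ => ?_
  simp [smul_smul, mul_comm]

lemma conv_pr_pl (u : C →ₗ[k] E) (v : D →ₗ[k] E) :
    toConv (v ∘ₗ (pr k C D).toLinearMap) * toConv (u ∘ₗ (pl k C D).toLinearMap) =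
      toConv (LinearMap.mul' k E ∘ₗ TensorProduct.map v u ∘ₗ
        (TensorProduct.comm k C D).toLinearMap) := by
  apply WithConv.ext
  apply TensorProduct.ext'
  intro x y
  rw [(tRepr (ℛ k x) (ℛ k y)).convMul_apply]
  have ex : u x = ∑ i ∈ (ℛ k x).index, counit (R := k) ((ℛ k x).left i) • u ((ℛ k x).right i) := by
    simp only [← map_smul, ← map_sum, sum_counit_smul]
  have ey : v y = ∑ i ∈ (ℛ k y).index, counit (R := k) ((ℛ k y).right i) • v ((ℛ k y).left i) := by
    simp only [← map_smul, ← map_sum, sum_counit_smul_r]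
  simp only [tRepr, Finset.sum_product, LinearMap.comp_apply, TensorProduct.map_tmul,
    LinearMap.mul'_apply, ex, ey, Finset.sum_mul_sum, LinearEquiv.coe_coe,
    TensorProduct.comm_tmul]
  rw [Finset.sum_comm]
  refine Finset.sum_congr rfl fun i _ => Finset.sum_congr rfl fun j _ => ?_
  simp [smul_smul, mul_comm]

end main

/-- the structure map as a `k`-algebra map -/
noncomputable def zm : Z →ₐ[k] TwE d :=
  { algebraMap Z (TwE d) with
    commutes' := fun c => by
      change algebraMap Z (TwE d) (algebraMap k Z c) = algebraMap k (TwE d) c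
      simp only [Algebra.algebraMap_eq_smul_one, smul_assoc, one_smul] }

lemma zm_apply (z : Z) : zm d z = z • (1 : TwE d) := Algebra.algebraMap_eq_smul_one z

lemma main_tw (h l : H) : ginv d h * ginv d l =
    (toConv (ginv d ∘ₗ (Bialgebra.mulCoalgHom k H).toLinearMap) *
      toConv ((zm d).toLinearMap ∘ₗ d.g)) (l ⊗ₜ h) := by
  have h1 : toConv (ga d ∘ₗ (pl k H H).toLinearMap) * toConv (ga d ∘ₗ (pr k H H).toLinearMap) =
      toConv ((zm d).toLinearMap ∘ₗ d.f) *
        toConv (ga d ∘ₗ (Bialgebra.mulCoalgHom k H).toLinearMap) := by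
    rw [conv_pl_pr]
    apply WithConv.ext
    apply TensorProduct.ext'
    intro x y
    rw [(tRepr (ℛ k x) (ℛ k y)).convMul_apply]
    change ga d x * ga d y = _
    rw [ga_mul_ga, mu, act_repr _ _ (tRepr (ℛ k x) (ℛ k y))]
    refine Finset.sum_congr rfl fun i _ => ?_
    simp only [LinearMap.comp_apply, AlgHom.toLinearMap_apply, zm_apply, smul_mul_assoc, one_mul]
    rfl
  have h2 : toConv ((zm d).toLinearMap ∘ₗ d.f) * toConv ((zm d).toLinearMap ∘ₗ d.g) = 1 := by
    have := LinearMap.algHom_comp_convMul_distrib (zm d) (toConv d.f) (toConv d.g)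
    rw [d.fg] at this
    apply WithConv.ext
    refine this.symm.trans ?_
    apply LinearMap.ext
    intro x
    simp
  have X : (toConv (ginv d ∘ₗ (pr k H H).toLinearMap) *
      toConv (ginv d ∘ₗ (pl k H H).toLinearMap)) *
      (toConv (ga d ∘ₗ (pl k H H).toLinearMap) * toConv (ga d ∘ₗ (pr k H H).toLinearMap)) = 1 := by
    rw [mul_assoc, ← mul_assoc (toConv (ginv d ∘ₗ (pl k H H).toLinearMap)),
      conv_comp_one (ginv_mul_ga d), one_mul, conv_comp_one (ginv_mul_ga d)]
  have Y : (toConv (ga d ∘ₗ (pl k H H).toLinearMap) * toConv (ga d ∘ₗ (pr k H H).toLinearMap)) *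
      (toConv (ginv d ∘ₗ (Bialgebra.mulCoalgHom k H).toLinearMap) *
      toConv ((zm d).toLinearMap ∘ₗ d.g)) = 1 := by
    rw [h1, mul_assoc, ← mul_assoc (toConv (ga d ∘ₗ (Bialgebra.mulCoalgHom k H).toLinearMap)),
      conv_comp_one (ga_mul_ginv d), one_mul, h2]
  rw [← left_inv_eq_right_inv X Y, conv_pr_pl]
  simp

end
end TwAux

namespace TwAux
open Coalgebra WithConv HopfAlgebra
section
variable {k Z H : Type*} [CommRing k] [CommRing Z] [Algebra k Z] [Ring H] [HopfAlgebra k H]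

/-- image of a representation under a coalgebra map -/
noncomputable def cRepr {C D ι : Type*} [AddCommGroup C] [Module k C] [Coalgebra k C]
    [AddCommGroup D] [Module k D] [Coalgebra k D] (c : C →ₗc[k] D) {x : C} (r : Repr k x ι) :
    Repr k (c x) ι where
  index := r.index
  left i := c (r.left i)
  right i := c (r.right i)
  eq := by
    rw [← CoalgHomClass.map_comp_comul_apply, ← r.eq]
    simp

variable (d : CocData k Z H)

/-- `b ↦ g(S m(b₁) ⊗ m(b₂))` -/
noncomputable def ww : H ⊗[k] H →ₗ[k] Z :=
  d.g ∘ₗ TensorProduct.map (antipode k ∘ₗ LinearMap.mul' k H) (LinearMap.mul' k H) ∘ₗ comul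

lemma ww_repr {ι : Type*} {x : H ⊗[k] H} (r : Repr k x ι) :
    ww d x = ∑ i ∈ r.index, d.g (antipode k (LinearMap.mul' k H (r.left i)) ⊗ₜ
      LinearMap.mul' k H (r.right i)) := by
  simp [ww, ← r.eq]

lemma ginv_mul {ι : Type*} {x : H ⊗[k] H} (r : Repr k x ι) :
    ginv d (LinearMap.mul' k H x) = ∑ i ∈ r.index,
      ww d (r.right i) • ga d (antipode k (LinearMap.mul' k H (r.left i))) := by
  have := ginv_formula d (cRepr (Bialgebra.mulCoalgHom k H) r)
    (fun i => cRepr (Bialgebra.mulCoalgHom k H) (ℛ k (r.right i)))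
  refine this.trans ?_
  refine Finset.sum_congr rfl fun i _ => ?_
  rw [ww_repr d (ℛ k (r.right i)), Finset.sum_smul]
  rfl

lemma Y_formula {ι κ Λ : Type*} {x : H ⊗[k] H} (r : Repr k x ι)
    (b : ∀ i, Repr k (r.right i) κ) (c : ∀ i j, Repr k ((b i).right j) Λ) :
    (toConv (ginv d ∘ₗ (Bialgebra.mulCoalgHom k H).toLinearMap) *
      toConv ((zm d).toLinearMap ∘ₗ d.g)) x =
    ∑ i ∈ r.index, ∑ j ∈ (b i).index, ∑ p ∈ (c i j).index,
      (d.g (antipode k (LinearMap.mul' k H ((b i).left j)) ⊗ₜ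
        LinearMap.mul' k H ((c i j).left p)) * d.g ((c i j).right p)) •
        ga d (antipode k (LinearMap.mul' k H (r.left i))) := by
  rw [r.convMul_apply]
  have e1 : ∀ i, (ginv d ∘ₗ (Bialgebra.mulCoalgHom k H).toLinearMap) (r.left i) *
      ((zm d).toLinearMap ∘ₗ d.g) (r.right i) =
      ∑ j ∈ (ℛ k (r.left i)).index, (ww d ((ℛ k (r.left i)).right j) * d.g (r.right i)) •
        ga d (antipode k (LinearMap.mul' k H ((ℛ k (r.left i)).left j))) := by
    intro i
    have := ginv_mul d (ℛ k (r.left i))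
    have e : (ginv d ∘ₗ (Bialgebra.mulCoalgHom k H).toLinearMap) (r.left i) =
      ginv d (LinearMap.mul' k H (r.left i)) := rfl
    rw [e, this]
    simp only [LinearMap.comp_apply, AlgHom.toLinearMap_apply, zm_apply, mul_smul_comm, mul_one,
      Finset.smul_sum, smul_smul]
    simp only [mul_comm]
  refine (Finset.sum_congr rfl fun i _ => e1 i).trans ?_
  let T : H ⊗[k] H →ₗ[k] H ⊗[k] H →ₗ[k] H ⊗[k] H →ₗ[k] TwE d :=
    LinearMap.mk₂ k (fun x y => LinearMap.flip (Algebra.lsmul k k (TwE d)).toLinearMap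
        (ga d (antipode k (LinearMap.mul' k H x))) ∘ₗ LinearMap.mulLeft k (ww d y) ∘ₗ d.g)
      (by intros; apply LinearMap.ext; intro; simp)
      (by intro c x y; simp only [map_smul, LinearMap.smul_comp])
      (by intros; apply LinearMap.ext; intro; simp [add_smul, add_mul])
      (by intros; apply LinearMap.ext; intro; simp)
  refine (coassoc_sum T r (fun i => ℛ k _) b).trans ?_
  refine Finset.sum_congr rfl fun i _ => ?_
  simp only [T, LinearMap.mk₂_apply, LinearMap.comp_apply, LinearMap.flip_apply,
    AlgHom.toLinearMap_apply, Algebra.lsmul_coe, LinearMap.mulLeft_apply, ← Finset.sum_smul]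
  congr 1
  simp only [ww_repr d (ℛ k (_ : H ⊗[k] H)), Finset.sum_mul]
  let T2 : H ⊗[k] H →ₗ[k] H ⊗[k] H →ₗ[k] H ⊗[k] H →ₗ[k] Z :=
    LinearMap.mk₂ k (fun x y => LinearMap.mulLeft k
        (d.g (antipode k (LinearMap.mul' k H x) ⊗ₜ LinearMap.mul' k H y)) ∘ₗ d.g)
      (by intros; apply LinearMap.ext; intro; simp [TensorProduct.add_tmul, add_mul])
      (by intros; apply LinearMap.ext; intro; simp [← TensorProduct.smul_tmul'])
      (by intros; apply LinearMap.ext; intro; simp [TensorProduct.tmul_add, add_mul])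
      (by intros; apply LinearMap.ext; intro; simp)
  exact coassoc_sum T2 (b i) (fun i => ℛ k _) (c i)

/-- final formula in the twisted algebra -/
lemma final_tw (R : ∀ h : H, Repr k h ℕ) (h l : H) :
    ginv d h * ginv d l = ∑ i ∈ (R l).index, ∑ j ∈ (R ((R l).right i)).index,
      ∑ p ∈ (R ((R ((R l).right i)).right j)).index,
      ∑ q ∈ (R h).index, ∑ r ∈ (R ((R h).right q)).index,
      ∑ s ∈ (R ((R ((R h).right q)).right r)).index,
      (d.g (antipode k ((R ((R l).right i)).left j * (R ((R h).right q)).left r) ⊗ₜ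
        ((R ((R ((R l).right i)).right j)).left p * (R ((R ((R h).right q)).right r)).left s)) *
       d.g ((R ((R ((R l).right i)).right j)).right p ⊗ₜ
          (R ((R ((R h).right q)).right r)).right s)) •
        ga d (antipode k ((R l).left i * (R h).left q)) := by
  rw [main_tw, Y_formula d (tRepr (R l) (R h)) (fun i => tRepr (R _) (R _))
    (fun i j => tRepr (R _) (R _))]
  simp only [tRepr, Finset.sum_product, LinearMap.mul'_apply]
  refine Finset.sum_congr rfl fun i _ => ?_
  rw [Finset.sum_comm]
  refine Finset.sum_congr rfl fun j _ => ?_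
  refine Eq.trans (Finset.sum_congr rfl fun q _ => Finset.sum_comm) ?_
  exact Finset.sum_comm

end

section transfer
variable {k Z A H : Type*} [CommRing k] [CommRing Z] [Algebra k Z] [Ring A] [Algebra k A]
  [Ring H] [HopfAlgebra k H] (d : CocData k Z H)

/-- the map `Z # H → A # H` -/
noncomputable def J (ι : Z →ₐ[k] A) : TwE d →ₗ[k] A ⊗[k] H := LinearMap.rTensor H ι.toLinearMap

lemma J_smul (ι : Z →ₐ[k] A) (z : Z) (h : H) : J d ι (z • ga d h) = ι z ⊗ₜ h := by
  change LinearMap.rTensor H ι.toLinearMap (z • ((1 : Z) ⊗ₜ[k] h)) = _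
  simp [TensorProduct.smul_tmul']

lemma crossedMul_tmul {ι κ Λ : Type*} (σ : H →ₗ[k] A →ₗ[k] A) (f : H →ₗ[k] H →ₗ[k] A) (a b : A)
    {h l : H} (r : Repr k h ι) (s : ∀ i, Repr k (r.left i) κ) (t : Repr k l Λ) :
    crossedMul k A H σ f (a ⊗ₜ h) (b ⊗ₜ l) = ∑ i ∈ r.index, ∑ j ∈ (s i).index, ∑ p ∈ t.index,
      (a * (σ ((s i).left j) b * f ((s i).right j) (t.left p))) ⊗ₜ[k]
        (r.right i * t.right p) := by
  simp only [crossedMul, ← r.eq, ← t.eq, TensorProduct.lift.tmul, LinearMap.compl₂_apply,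
    LinearMap.comp_apply, LinearMap.llcomp_apply, TensorProduct.curry_apply,
    TensorProduct.map_tmul, map_sum, LinearMap.rTensor_tmul, LinearMap.lTensor_tmul,
    ← (s _).eq, TensorProduct.sum_tmul, TensorProduct.tmul_sum, LinearEquiv.coe_coe,
    TensorProduct.tensorTensorTensorComm_tmul, TensorProduct.assoc_symm_tmul,
    LinearMap.mul'_apply]
  rw [Finset.sum_comm]
  exact Finset.sum_congr rfl fun i _ => Finset.sum_comm

lemma gammaInv_repr {ι : Type*} {κ : ι → Type*} (finv : H →ₗ[k] H →ₗ[k] A)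
    {h : H} (r : Repr k h ι) (b : ∀ i, Repr k (r.right i) (κ i)) :
    gammaInv k A H finv h = ∑ i ∈ r.index, ∑ j ∈ (b i).index,
      finv (antipode k ((b i).left j)) ((b i).right j) ⊗ₜ antipode k (r.left i) := by
  simp only [gammaInv, LinearMap.comp_apply, ← r.eq, map_sum, LinearMap.lTensor_tmul, ← (b _).eq,
    TensorProduct.tmul_sum, TensorProduct.map_tmul, LinearMap.rTensor_tmul,
    TensorProduct.lift.tmul, LinearEquiv.coe_coe, TensorProduct.comm_tmul]

lemma J_ginv (ι : Z →ₐ[k] A) (finv : H →ₗ[k] H →ₗ[k] A)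
    (hg : ∀ x y, finv x y = ι (d.g (x ⊗ₜ y))) (h : H) :
    gammaInv k A H finv h = J d ι (ginv d h) := by
  rw [gammaInv_repr finv (ℛ k h) (fun i => ℛ k _), ginv_formula d (ℛ k h) (fun i => ℛ k _)]
  simp only [map_sum, J_smul, hg]

lemma J_mul (ι : Z →ₐ[k] A) (σ : H →ₗ[k] A →ₗ[k] A) (f : H →ₗ[k] H →ₗ[k] A)
    (hσ : ∀ h z, σ h (ι z) = counit (R := k) h • ι z)
    (hf : ∀ x y, f x y = ι (d.f (x ⊗ₜ y))) (x y : TwE d) :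
    crossedMul k A H σ f (J d ι x) (J d ι y) = J d ι (x * y) := by
  induction x using tw_induction with
  | hadd x y hx hy => simp only [map_add, LinearMap.add_apply, hx, hy, add_mul]
  | hs a h =>
  induction y using tw_induction with
  | hadd x y hx hy => simp only [map_add, hx, hy, mul_add]
  | hs b l =>
  rw [J_smul, J_smul, crossedMul_tmul σ f _ _ (ℛ k h) (fun i => ℛ k _) (ℛ k l), smul_mul_smul_comm,
    ga_mul_ga, mu, act_tmul _ _ (ℛ k h) (ℛ k l)]
  simp only [Finset.smul_sum, smul_smul, LinearMap.comp_apply, LinearMap.mul'_apply, map_sum,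
    J_smul]
  refine Finset.sum_congr rfl fun i _ => ?_
  rw [Finset.sum_comm]
  refine Finset.sum_congr rfl fun p _ => ?_
  have e := sum_counit_smul (R := k) (ℛ k ((ℛ k h).left i))
  rw [← TensorProduct.sum_tmul]
  congr 1
  have e2 : f ((ℛ k h).left i) ((ℛ k l).left p) = ∑ j ∈ (ℛ k ((ℛ k h).left i)).index,
      counit (R := k) ((ℛ k ((ℛ k h).left i)).left j) •
        f ((ℛ k ((ℛ k h).left i)).right j) ((ℛ k l).left p) := by
    have := congrArg (fun z => f z ((ℛ k l).left p)) e
    simpa only [map_sum, map_smul, LinearMap.sum_apply, LinearMap.smul_apply] using this.symm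
  rw [map_mul, ← hf, e2, map_mul, Finset.mul_sum]
  refine Finset.sum_congr rfl fun j _ => ?_
  simp only [hσ, smul_mul_assoc, mul_smul_comm, mul_assoc]

lemma transfer (ι : Z →ₐ[k] A) (σ : H →ₗ[k] A →ₗ[k] A) (f finv : H →ₗ[k] H →ₗ[k] A)
    (hσ : ∀ h z, σ h (ι z) = counit (R := k) h • ι z)
    (hf : ∀ x y, f x y = ι (d.f (x ⊗ₜ y)))
    (hg : ∀ x y, finv x y = ι (d.g (x ⊗ₜ y)))
    (R : ∀ h : H, Repr k h ℕ) (h l : H) :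
    crossedMul k A H σ f (gammaInv k A H finv h) (gammaInv k A H finv l) =
    ∑ i ∈ (R l).index, ∑ j ∈ (R ((R l).right i)).index,
      ∑ p ∈ (R ((R ((R l).right i)).right j)).index,
      ∑ q ∈ (R h).index, ∑ r ∈ (R ((R h).right q)).index,
      ∑ s ∈ (R ((R ((R h).right q)).right r)).index,
      (finv (antipode k ((R ((R l).right i)).left j * (R ((R h).right q)).left r))
        ((R ((R ((R l).right i)).right j)).left p * (R ((R ((R h).right q)).right r)).left s) *
       finv ((R ((R ((R l).right i)).right j)).right p)
          ((R ((R ((R h).right q)).right r)).right s)) ⊗ₜ[k]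
        (antipode k ((R l).left i * (R h).left q)) := by
  rw [J_ginv d ι finv hg, J_ginv d ι finv hg, J_mul d ι σ f hσ hf, final_tw d R]
  simp only [map_sum, J_smul, map_mul, hg]

end transfer
end TwAux

namespace TwAux
open Coalgebra WithConv HopfAlgebra
section fin
variable {k A H : Type*} [CommRing k] [Ring A] [Algebra k A]
  [Ring H] [HopfAlgebra k H]

lemma counit_counit {ι : Type*} {h : H} (r : Repr k h ι) :
    ∑ i ∈ r.index, counit (R := k) (r.left i) * counit (R := k) (r.right i) = counit h := by
  have := congrArg (counit (R := k)) (sum_counit_smul (R := k) r)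
  simpa only [map_sum, map_smul, smul_eq_mul] using this

/-- central invariants -/
def Zs (σ : H →ₗ[k] A →ₗ[k] A) (R : ∀ h : H, Repr k h ℕ)
    (h1 : ∀ (h : H) (a b : A),
      σ h (a * b) = ∑ i ∈ (R h).index, σ ((R h).left i) a * σ ((R h).right i) b)
    (h2 : ∀ h : H, σ h (1 : A) = counit (R := k) h • (1 : A)) : Subalgebra k A where
  carrier := {a | (∀ b, a * b = b * a) ∧ ∀ h, σ h a = counit (R := k) h • a}
  mul_mem' := by
    rintro a b ⟨ha, ha'⟩ ⟨hb, hb'⟩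
    refine ⟨fun c => by rw [mul_assoc, hb, ← mul_assoc, ha, mul_assoc], fun h => ?_⟩
    rw [h1]
    simp only [ha', hb', smul_mul_smul_comm, ← Finset.sum_smul, counit_counit]
  add_mem' := by
    rintro a b ⟨ha, ha'⟩ ⟨hb, hb'⟩
    exact ⟨fun c => by rw [add_mul, ha, hb, mul_add], fun h => by rw [map_add, ha', hb', smul_add]⟩
  algebraMap_mem' := fun c =>
    ⟨fun b => Algebra.commutes c b, fun h => by
      rw [Algebra.algebraMap_eq_smul_one, map_smul, h2, smul_comm]⟩

/-- commutative ring structure on a commutative subalgebra -/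
abbrev commRingOf (S : Subalgebra k A) (h : ∀ x ∈ S, ∀ y ∈ S, x * y = y * x) : CommRing S :=
  { (inferInstance : Ring S) with
    mul_comm := fun x y => Subtype.ext (h x x.2 y y.2) }

lemma conv_unique_comm {C : Type*} [AddCommGroup C] [Module k C] [Coalgebra k C]
    {F G : C →ₗ[k] A} (hFG : toConv F * toConv G = 1) (hGF : toConv G * toConv F = 1)
    (hF : ∀ x b, F x * b = b * F x) (x : C) (a : A) : G x * a = a * G x := by
  let al : WithConv (C →ₗ[k] A) := toConv (LinearMap.smulRight (counit (R := k)) a)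
  have el : ∀ (V : C →ₗ[k] A) (x : C), (al * toConv V) x = a * V x := by
    intro V x
    rw [(ℛ k x).convMul_apply]
    have e1 : V x = ∑ i ∈ (ℛ k x).index,
        counit (R := k) ((ℛ k x).left i) • V ((ℛ k x).right i) := by
      simp only [← map_smul, ← map_sum, sum_counit_smul]
    rw [e1, Finset.mul_sum]
    refine Finset.sum_congr rfl fun i _ => ?_
    rw [mul_smul_comm, ← smul_mul_assoc]
    rfl
  have er : ∀ (V : C →ₗ[k] A) (x : C), (toConv V * al) x = V x * a := by
    intro V x
    rw [(ℛ k x).convMul_apply]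
    have e1 : V x = ∑ i ∈ (ℛ k x).index,
        counit (R := k) ((ℛ k x).right i) • V ((ℛ k x).left i) := by
      simp only [← map_smul, ← map_sum, sum_counit_smul_r]
    rw [e1, Finset.sum_mul]
    refine Finset.sum_congr rfl fun i _ => ?_
    rw [smul_mul_assoc, ← mul_smul_comm]
    rfl
  have e : al * toConv F = toConv F * al := by
    ext x
    rw [el, er, hF]
  have e' : toConv G * al = al * toConv G := by
    calc toConv G * al = toConv G * al * (toConv F * toConv G) := by rw [hFG, mul_one]
      _ = toConv G * (al * toConv F) * toConv G := by simp only [mul_assoc]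
      _ = (toConv G * toConv F) * (al * toConv G) := by rw [e]; simp only [mul_assoc]
      _ = al * toConv G := by rw [hGF, one_mul]
  rw [← el, ← er, e']

lemma conv_unique_inv {C : Type*} [AddCommGroup C] [Module k C] [Coalgebra k C]
    (σ : H →ₗ[k] A →ₗ[k] A) (R : ∀ h : H, Repr k h ℕ)
    (h1 : ∀ (h : H) (a b : A),
      σ h (a * b) = ∑ i ∈ (R h).index, σ ((R h).left i) a * σ ((R h).right i) b)
    (h2 : ∀ h : H, σ h (1 : A) = counit (R := k) h • (1 : A))
    {F G : C →ₗ[k] A} (hFG : toConv F * toConv G = 1) (hGF : toConv G * toConv F = 1)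
    (hF : ∀ x h, σ h (F x) = counit (R := k) h • F x) (x : C) (h : H) :
    σ h (G x) = counit (R := k) h • G x := by
  have hP : toConv (TensorProduct.lift σ ∘ₗ LinearMap.lTensor H G) *
      toConv (F ∘ₗ (pr k H C).toLinearMap) = 1 := by
    apply WithConv.ext
    apply TensorProduct.ext'
    intro h x
    rw [(tRepr (R h) (ℛ k x)).convMul_apply]
    simp only [tRepr, Finset.sum_product, LinearMap.comp_apply, LinearMap.lTensor_tmul,
      TensorProduct.lift.tmul]
    have e1 : ∀ (y : H) (z : C), F ((pr k H C).toLinearMap (y ⊗ₜ z)) = σ y (F z) := by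
      intro y z
      rw [hF]
      change F (counit (R := k) y • z) = _
      rw [map_smul]
    simp only [e1]
    rw [Finset.sum_comm]
    simp only [← h1, ← map_sum]
    have e2 := congrArg (fun u : WithConv (C →ₗ[k] A) => u x) hGF
    simp only [(ℛ k x).convMul_apply] at e2
    change σ h (∑ i ∈ (ℛ k x).index, G ((ℛ k x).left i) * F ((ℛ k x).right i)) = _
    refine (congrArg (σ h) e2).trans ?_
    simp [Algebra.algebraMap_eq_smul_one, h2, smul_smul, mul_comm]
  have := congrArg (fun u : WithConv (H ⊗[k] C →ₗ[k] A) => u (h ⊗ₜ x))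
    (left_inv_eq_right_inv hP (conv_comp_one hFG (pr k H C)))
  refine Eq.trans this ?_
  change G (counit (R := k) h • x) = _
  rw [map_smul]

lemma conv_inj {C Z : Type*} [AddCommGroup C] [Module k C] [Coalgebra k C] [CommRing Z]
    [Algebra k Z] (ι : Z →ₐ[k] A) (hι : Function.Injective ι) (u v : C →ₗ[k] Z) (F G : C →ₗ[k] A)
    (hF : ∀ x, F x = ι (u x)) (hG : ∀ x, G x = ι (v x))
    (h : toConv F * toConv G = 1) : toConv u * toConv v = 1 := by
  ext x
  apply hι
  have e2 := congrArg (fun u : WithConv (C →ₗ[k] A) => u x) h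
  simp only [(ℛ k x).convMul_apply, LinearMap.convOne_apply] at e2 ⊢
  rw [map_sum, AlgHom.commutes, ← e2]
  refine Finset.sum_congr rfl fun i _ => ?_
  rw [map_mul]
  exact congrArg₂ _ (hF _).symm (hG _).symm

lemma final_aux (σ : H →ₗ[k] A →ₗ[k] A) (R : ∀ h : H, Repr k h ℕ)
    (h1 : ∀ (h : H) (a b : A),
      σ h (a * b) = ∑ i ∈ (R h).index, σ ((R h).left i) a * σ ((R h).right i) b)
    (h2 : ∀ h : H, σ h (1 : A) = counit (R := k) h • (1 : A))
    (f finv : H →ₗ[k] H →ₗ[k] A) (hnormal : IsNormal k A H f)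
    (hcoc : ∀ h l m : H,
    (∑ i ∈ (R h).index, ∑ j ∈ (R l).index, ∑ p ∈ (R m).index,
      σ ((R h).left i) (f ((R l).left j) ((R m).left p)) *
        f ((R h).right i) ((R l).right j * (R m).right p)) =
    ∑ i ∈ (R h).index, ∑ j ∈ (R l).index,
      f ((R h).left i) ((R l).left j) * f ((R h).right i * (R l).right j) m)
    (hinv : ∀ h l : H,
    (∑ i ∈ (R h).index, ∑ j ∈ (R l).index,
        f ((R h).left i) ((R l).left j) * finv ((R h).right i) ((R l).right j) =
      (counit (R := k) h * counit (R := k) l) • (1 : A)) ∧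
    (∑ i ∈ (R h).index, ∑ j ∈ (R l).index,
        finv ((R h).left i) ((R l).left j) * f ((R h).right i) ((R l).right j) =
      (counit (R := k) h * counit (R := k) l) • (1 : A)))
    (hfk : ∀ h l : H, ∃ c : k, f h l = c • (1 : A)) (h l : H) :
    crossedMul k A H σ f (gammaInv k A H finv h) (gammaInv k A H finv l) =
    ∑ i ∈ (R l).index, ∑ j ∈ (R ((R l).right i)).index,
      ∑ p ∈ (R ((R ((R l).right i)).right j)).index,
      ∑ q ∈ (R h).index, ∑ r ∈ (R ((R h).right q)).index,
      ∑ s ∈ (R ((R ((R h).right q)).right r)).index,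
      (finv (antipode k ((R ((R l).right i)).left j * (R ((R h).right q)).left r))
        ((R ((R ((R l).right i)).right j)).left p * (R ((R ((R h).right q)).right r)).left s) *
       finv ((R ((R ((R l).right i)).right j)).right p)
          ((R ((R ((R h).right q)).right r)).right s)) ⊗ₜ[k]
        (antipode k ((R l).left i * (R h).left q)) := by
  let S := Zs σ R h1 h2
  letI : CommRing S := commRingOf S (fun x hx y _ => hx.1 y)
  let F : H ⊗[k] H →ₗ[k] A := TensorProduct.lift f
  let G : H ⊗[k] H →ₗ[k] A := TensorProduct.lift finv
  have hFG : toConv F * toConv G = 1 := by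
    apply WithConv.ext
    apply TensorProduct.ext'
    intro x y
    rw [(tRepr (R x) (R y)).convMul_apply]
    simp only [tRepr, Finset.sum_product]
    refine ((hinv x y).1).trans ?_
    simp [Algebra.algebraMap_eq_smul_one, mul_comm]
  have hGF : toConv G * toConv F = 1 := by
    apply WithConv.ext
    apply TensorProduct.ext'
    intro x y
    rw [(tRepr (R x) (R y)).convMul_apply]
    simp only [tRepr, Finset.sum_product]
    refine ((hinv x y).2).trans ?_
    simp [Algebra.algebraMap_eq_smul_one, mul_comm]
  have hF : ∀ x, F x ∈ S := by
    intro x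
    induction x using TensorProduct.induction_on with
    | zero => rw [map_zero]; exact zero_mem S
    | tmul x y =>
      obtain ⟨c, hc⟩ := hfk x y
      have : F (x ⊗ₜ y) = c • (1 : A) := hc
      rw [this]
      exact S.smul_mem (one_mem S) c
    | add x y hx hy => rw [map_add]; exact add_mem hx hy
  have hG : ∀ x, G x ∈ S := fun x =>
    ⟨fun b => conv_unique_comm hFG hGF (fun x b => (hF x).1 b) x b,
     fun h => conv_unique_inv σ R h1 h2 hFG hGF (fun x h => (hF x).2 h) x h⟩
  let f' : H ⊗[k] H →ₗ[k] S := LinearMap.codRestrict (Subalgebra.toSubmodule S) F hF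
  let g' : H ⊗[k] H →ₗ[k] S := LinearMap.codRestrict (Subalgebra.toSubmodule S) G hG
  have hf' : ∀ x, F x = S.val (f' x) := fun _ => rfl
  have hg' : ∀ x, G x = S.val (g' x) := fun _ => rfl
  have hval : Function.Injective S.val := Subtype.val_injective
  let d : CocData k S H :=
    { f := f'
      g := g'
      fg := conv_inj S.val hval f' g' F G hf' hg' hFG
      gf := conv_inj S.val hval g' f' G F hg' hf' hGF
      f_one := fun h => by
        apply hval
        rw [← hf', AlgHom.commutes, Algebra.algebraMap_eq_smul_one]
        exact (hnormal h).1
      one_f := fun h => by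
        apply hval
        rw [← hf', AlgHom.commutes, Algebra.algebraMap_eq_smul_one]
        exact (hnormal h).2
      coc := by
        apply WithConv.ext
        apply TensorProduct.ext_threefold
        intro h l m
        apply hval
        rw [(tRepr (tRepr (R h) (R l)) (R m)).convMul_apply,
          (tRepr (tRepr (R h) (R l)) (R m)).convMul_apply]
        simp only [tRepr, Finset.sum_product, map_sum, map_mul]
        refine Eq.trans ?_ (Eq.trans (hcoc h l m).symm ?_)
        · refine Finset.sum_congr rfl fun i _ => Finset.sum_congr rfl fun j _ => ?_
          have e : F (((R h).right i * (R l).right j) ⊗ₜ m) = ∑ p ∈ (R m).index,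
              counit (R := k) ((R m).left p) •
                F (((R h).right i * (R l).right j) ⊗ₜ (R m).right p) := by
            simp only [← map_smul, ← map_sum, ← TensorProduct.tmul_smul,
              ← TensorProduct.tmul_sum, sum_counit_smul]
          change _ = F ((R h).left i ⊗ₜ (R l).left j) * F (((R h).right i * (R l).right j) ⊗ₜ m)
          rw [e, Finset.mul_sum]
          refine Finset.sum_congr rfl fun p _ => ?_
          change F (counit (R := k) ((R m).left p) • ((R h).left i ⊗ₜ (R l).left j)) *
            F (((R h).right i * (R l).right j) ⊗ₜ (R m).right p) = _
          rw [map_smul, smul_mul_assoc, mul_smul_comm]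
        · refine Finset.sum_congr rfl fun i _ => Finset.sum_congr rfl fun j _ =>
            Finset.sum_congr rfl fun p _ => ?_
          change σ ((R h).left i) (F ((R l).left j ⊗ₜ (R m).left p)) * _ =
            F (counit (R := k) ((R h).left i) • ((R l).left j ⊗ₜ (R m).left p)) *
            F ((R h).right i ⊗ₜ ((R l).right j * (R m).right p))
          rw [map_smul, (hF _).2]
          rfl }
  exact transfer d S.val σ f finv (fun h z => z.2.2 h) (fun x y => rfl) (fun x y => rfl) R h l

end fin
end TwAux


/-- If moreover `f` (hence `f⁻¹`) takes its values in `k·1_A`, then in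
`E = A #_f H` one has
`γ⁻¹(h) γ⁻¹(l) = f⁻¹(S(l⁽²⁾h⁽²⁾), l⁽³⁾h⁽³⁾) f⁻¹(l⁽⁴⁾, h⁽⁴⁾) γ(S(l⁽¹⁾h⁽¹⁾))`. -/
theorem gammaInv_mul_gammaInv
    (k A H : Type*) [CommRing k] [Ring A] [Algebra k A] [Ring H] [HopfAlgebra k H]
    (σ : H →ₗ[k] A →ₗ[k] A) (f finv : H →ₗ[k] H →ₗ[k] A)
    (n : H → ℕ) (c₁ c₂ : H → ℕ → H)
    (hrep : IsSweedlerRep k H n c₁ c₂)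
    (hweak : IsWeakAction k A H n c₁ c₂ σ)
    (hnormal : IsNormal k A H f)
    (hcocycle : IsCocycle k A H n c₁ c₂ σ f)
    (htwisted : IsTwistedModule k A H n c₁ c₂ σ f)
    (hinv : IsConvInverse k A H n c₁ c₂ f finv)
    (hfk : ∀ h l : H, ∃ c : k, f h l = c • (1 : A)) :
    ∀ h l : H,
      crossedMul k A H σ f (gammaInv k A H finv h) (gammaInv k A H finv l) =
        ∑ i ∈ Finset.range (n l), ∑ j ∈ Finset.range (n (c₂ l i)),
          ∑ p ∈ Finset.range (n (c₂ (c₂ l i) j)),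
            ∑ q ∈ Finset.range (n h), ∑ r ∈ Finset.range (n (c₂ h q)),
              ∑ s ∈ Finset.range (n (c₂ (c₂ h q) r)),
                (finv (HopfAlgebra.antipode (R := k) (c₁ (c₂ l i) j * c₁ (c₂ h q) r))
                      (c₁ (c₂ (c₂ l i) j) p * c₁ (c₂ (c₂ h q) r) s) *
                    finv (c₂ (c₂ (c₂ l i) j) p) (c₂ (c₂ (c₂ h q) r) s)) ⊗ₜ[k]
                  HopfAlgebra.antipode (R := k) (c₁ l i * c₁ h q) := by
  intro h l
  exact TwAux.final_aux σ
    (fun h => ⟨Finset.range (n h), c₁ h, c₂ h, (hrep h).symm⟩) hweak.1 hweak.2.1 f finv hnormal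
    hcocycle hinv hfk h l
end
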